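/- arXiv:2407.09917 — 11 statements merged into one kernel-verified Lean document; each statement's English description precedes it below -/
import Mathlib

section
/- Assume ∂_r p₋(r) = ρ₋(r) w₋(r)²/r for all r ∈ (0,r₀). Then the downstream equation ∂_r p₊(r) = ρ₊(r) w₊(r)²/r holds for all r ∈ (0,r₀) if and only if ∂_r (1/M₋²)(r) = ((γ−1)/(4 q₋(r)²)) · (w₋(r)²/r) · ( (γ+1)²/(γ−1 + 2/M₋²(r)) − (γ−1 + 2/M₋²(r)) ) for all r ∈ (0,r₀). (Lemma 2.2 of the paper.) -/
/-- Lemma 2.2: assuming the upstream radial momentum equation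
`∂_r p₋ = ρ₋ w₋² / r`, the downstream equation `∂_r p₊ = ρ₊ w₊² / r` holds
iff `1/M₋²` solves the ODE (2.24). -/
theorem stmt_0 (γ r₀ μ2 : ℝ) (hγ : 1 < γ) (hr₀ : 0 < r₀)
    (hμ2 : μ2 = (γ - 1) / (γ + 1))
    (pm ρm qm wm c2m M2m pp qp ρp wp : ℝ → ℝ)
    (hpm_diff : ∀ r ∈ Set.Ioo (0:ℝ) r₀, DifferentiableAt ℝ pm r)
    (hρm_diff : ∀ r ∈ Set.Ioo (0:ℝ) r₀, DifferentiableAt ℝ ρm r)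
    (hqm_diff : ∀ r ∈ Set.Ioo (0:ℝ) r₀, DifferentiableAt ℝ qm r)
    (hwm_diff : ∀ r ∈ Set.Ioo (0:ℝ) r₀, DifferentiableAt ℝ wm r)
    (hpm_pos : ∀ r ∈ Set.Ioo (0:ℝ) r₀, 0 < pm r)
    (hρm_pos : ∀ r ∈ Set.Ioo (0:ℝ) r₀, 0 < ρm r)
    (hqm_pos : ∀ r ∈ Set.Ioo (0:ℝ) r₀, 0 < qm r)
    (hc2m : ∀ r, c2m r = γ * pm r / ρm r)
    (hM2m : ∀ r, M2m r = ρm r * (qm r) ^ 2 / (γ * pm r))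
    (hpp : ∀ r, pp r = ((1 + μ2) * M2m r - μ2) * pm r)
    (hqp : ∀ r, qp r = μ2 * (qm r + (2 / (γ - 1)) * c2m r / qm r))
    (hρp : ∀ r, ρp r = ρm r * qm r / qp r)
    (hwp : ∀ r, wp r = wm r)
    (hup : ∀ r ∈ Set.Ioo (0:ℝ) r₀, deriv pm r = ρm r * (wm r) ^ 2 / r) :
    (∀ r ∈ Set.Ioo (0:ℝ) r₀, deriv pp r = ρp r * (wp r) ^ 2 / r) ↔
      (∀ r ∈ Set.Ioo (0:ℝ) r₀,
        deriv (fun s => 1 / M2m s) r =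
          (γ - 1) / (4 * (qm r) ^ 2) * ((wm r) ^ 2 / r) *
            ((γ + 1) ^ 2 / (γ - 1 + 2 / M2m r) - (γ - 1 + 2 / M2m r))) := by
  refine forall₂_congr fun r hr => ?_
  have hp := hpm_pos r hr
  have hρ := hρm_pos r hr
  have hq := hqm_pos r hr
  have hr0 : 0 < r := hr.1
  have hγ0 : 0 < γ := by linarith
  have hγ1 : 0 < γ - 1 := by linarith
  have hγ2 : 0 < γ + 1 := by linarith
  have hm : 0 < M2m r := by rw [hM2m]; positivity
  have hMd : DifferentiableAt ℝ M2m r := by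
    rw [funext hM2m]
    exact ((hρm_diff r hr).mul ((hqm_diff r hr).pow 2)).div
      ((hpm_diff r hr).const_mul γ) (by positivity)
  have hM' := hMd.hasDerivAt
  have hP' := (hpm_diff r hr).hasDerivAt
  have h1 : deriv pp r = (1 + μ2) * deriv M2m r * pm r
      + ((1 + μ2) * M2m r - μ2) * deriv pm r := by
    rw [funext hpp]
    exact (((hM'.const_mul (1 + μ2)).sub_const μ2).mul hP').deriv
  have h2 : deriv (fun s => 1 / M2m s) r = - deriv M2m r / (M2m r) ^ 2 := by
    have := (hM'.inv hm.ne').deriv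
    simp only [one_div]
    exact this
  have hpe : pm r = ρm r * qm r ^ 2 / (γ * M2m r) := by
    rw [hM2m]; field_simp
  have hD : 0 < (γ - 1) * M2m r + 2 := by positivity
  have hqe : qp r = qm r * ((γ - 1) * M2m r + 2) / ((γ + 1) * M2m r) := by
    rw [hqp, hc2m, hμ2, hpe]; field_simp
  have hρe : ρp r = ρm r * ((γ + 1) * M2m r) / ((γ - 1) * M2m r + 2) := by
    rw [hρp, hqe]; field_simp
  have hDe : γ - 1 + 2 / M2m r = ((γ - 1) * M2m r + 2) / M2m r := by field_simp
  rw [h1, h2, hup r hr, hρe, hwp, hDe, hμ2, hpe]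
  generalize deriv M2m r = x
  generalize M2m r = m at *
  generalize ρm r = ρ at *
  generalize qm r = q at *
  generalize wm r = w at *
  have key : ((1 + (γ - 1) / (γ + 1)) * x * (ρ * q ^ 2 / (γ * m))
      + ((1 + (γ - 1) / (γ + 1)) * m - (γ - 1) / (γ + 1)) * (ρ * w ^ 2 / r))
      - ρ * ((γ + 1) * m) / ((γ - 1) * m + 2) * w ^ 2 / r
      = -(2 * ρ * q ^ 2 * m / (γ + 1)) * (-x / m ^ 2 -
        (γ - 1) / (4 * q ^ 2) * (w ^ 2 / r) *
            ((γ + 1) ^ 2 / (((γ - 1) * m + 2) / m) - ((γ - 1) * m + 2) / m)) := by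
    field_simp
    ring
  have hk : -(2 * ρ * q ^ 2 * m / (γ + 1)) ≠ 0 := by
    apply neg_ne_zero.mpr; positivity
  rw [← sub_eq_zero, key, mul_eq_zero, or_iff_right hk, sub_eq_zero]
end

section
/- The function t satisfies t(0) = t₀, t is differentiable on (0,r₀), and for every r ∈ (0,r₀) it solves the ordinary differential equation ∂_r t(r) = ((γ−1)/(4 q(r)²)) · (w(r)²/r) · ( (γ+1)²/(γ−1+2t(r)) − (γ−1+2t(r)) ). (Solution formula in the proof of Lemma 2.3 of the paper.) -/
/-- Solution formula in the proof of Lemma 2.3: the explicit function `t`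
satisfies `t 0 = t₀` and solves the ODE for `1/M₋²` on `(0, r₀)`. -/
theorem stmt_1 (γ r₀ t₀ μ2 T₀ : ℝ) (hγ : 1 < γ) (hr₀ : 0 < r₀)
    (ht₀ : t₀ ∈ Set.Ioo (0:ℝ) 1)
    (hμ2 : μ2 = (γ - 1) / (γ + 1)) (hT₀ : T₀ = 1 + 2 * t₀ / (γ - 1))
    (w q t : ℝ → ℝ)
    (hw : ContDiffOn ℝ 1 w (Set.Icc 0 r₀))
    (hq : ContDiffOn ℝ 1 q (Set.Icc 0 r₀))
    (hw0 : w 0 = 0)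
    (hqpos : ∀ r ∈ Set.Icc (0:ℝ) r₀, 0 < q r)
    (ht : ∀ r, t r = ((γ + 1) / 2) *
      (Real.sqrt (1 - (1 - μ2 ^ 2 * T₀ ^ 2) *
        Real.exp (-(γ - 1) * ∫ τ in (0:ℝ)..r, (w τ) ^ 2 / (τ * (q τ) ^ 2))) - μ2)) :
    t 0 = t₀ ∧
    (∀ r ∈ Set.Ioo (0:ℝ) r₀, DifferentiableAt ℝ t r) ∧
    (∀ r ∈ Set.Ioo (0:ℝ) r₀,
      deriv t r = (γ - 1) / (4 * (q r) ^ 2) * ((w r) ^ 2 / r) *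
        ((γ + 1) ^ 2 / (γ - 1 + 2 * t r) - (γ - 1 + 2 * t r))) := by
  have hγ1 : 0 < γ - 1 := by linarith
  have hγ2 : 0 < γ + 1 := by linarith
  obtain ⟨ht0, ht1⟩ := ht₀
  have hm : μ2 * T₀ = (γ - 1 + 2 * t₀) / (γ + 1) := by
    rw [hμ2, hT₀]; field_simp
  have hm0 : 0 < μ2 * T₀ := by rw [hm]; positivity
  have hm1 : μ2 * T₀ < 1 := by rw [hm, div_lt_one hγ2]; linarith
  have hc : 1 - μ2 ^ 2 * T₀ ^ 2 = 1 - (μ2 * T₀) ^ 2 := by ring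
  set f : ℝ → ℝ := fun τ => (w τ) ^ 2 / (τ * (q τ) ^ 2) with hf
  have hwc := hw.continuousOn
  have hqc := hq.continuousOn
  have hfc : ContinuousOn f (Set.Icc 0 r₀) := by
    intro x hx
    have hqx : q x ≠ 0 := (hqpos x hx).ne'
    rcases eq_or_lt_of_le hx.1 with h0 | h0
    · subst h0
      rw [← continuousWithinAt_sdiff_self]
      have hd := ((hw.differentiableOn one_ne_zero) 0 hx).hasDerivWithinAt
      rw [hasDerivWithinAt_iff_tendsto_slope] at hd
      have h1 : Filter.Tendsto w (nhdsWithin 0 (Set.Icc 0 r₀ \ {0})) (nhds (w 0)) :=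
        (hwc 0 hx).mono Set.sdiff_subset
      have h2 : Filter.Tendsto q (nhdsWithin 0 (Set.Icc 0 r₀ \ {0})) (nhds (q 0)) :=
        (hqc 0 hx).mono Set.sdiff_subset
      have h3 := (hd.mul h1).div (h2.pow 2) (pow_ne_zero 2 hqx)
      have h4 : f 0 = derivWithin w (Set.Icc 0 r₀) 0 * w 0 / q 0 ^ 2 := by simp [hf, hw0]
      unfold ContinuousWithinAt
      rw [h4]
      refine h3.congr' ?_
      filter_upwards [self_mem_nhdsWithin] with y hy
      have hy0 : y ≠ 0 := hy.2
      have hqy : q y ≠ 0 := (hqpos y hy.1).ne'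
      simp only [hf, slope_def_field, hw0, Pi.mul_apply, Pi.div_apply, Pi.pow_apply, sub_zero]
      field_simp
    · exact ((hwc x hx).pow 2).div (continuousWithinAt_id.mul ((hqc x hx).pow 2))
        (mul_ne_zero h0.ne' (pow_ne_zero 2 hqx))
  have hF : ∀ r ∈ Set.Ioo (0:ℝ) r₀, HasDerivAt (fun r => ∫ τ in (0:ℝ)..r, f τ) (f r) r := by
    intro r hr
    have hi : IntervalIntegrable f MeasureTheory.volume 0 r := by
      apply ContinuousOn.intervalIntegrable
      rw [Set.uIcc_of_le hr.1.le]
      exact hfc.mono (Set.Icc_subset_Icc_right hr.2.le)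
    refine intervalIntegral.integral_hasDerivAt_right hi ?_ ?_
    · exact (hfc.mono Set.Ioo_subset_Icc_self).stronglyMeasurableAtFilter isOpen_Ioo r hr
    · exact hfc.continuousAt (Icc_mem_nhds hr.1 hr.2)
  have hpos : ∀ r ∈ Set.Ioo (0:ℝ) r₀, 0 ≤ ∫ τ in (0:ℝ)..r, f τ := by
    intro r hr
    apply intervalIntegral.integral_nonneg hr.1.le
    intro u hu
    have := hu.1
    simp only [hf]
    positivity
  have hmain : ∀ r ∈ Set.Ioo (0:ℝ) r₀, HasDerivAt t ((γ - 1) / (4 * (q r) ^ 2) * ((w r) ^ 2 / r) *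
        ((γ + 1) ^ 2 / (γ - 1 + 2 * t r) - (γ - 1 + 2 * t r))) r := by
    intro r hr
    have hr0 := hr.1
    have hqr : q r ≠ 0 := (hqpos r (Set.Ioo_subset_Icc_self hr)).ne'
    have hE := (((hF r hr).const_mul (-(γ - 1))).exp.const_mul (1 - μ2 ^ 2 * T₀ ^ 2)).const_sub 1
    have hE1 : Real.exp (-(γ - 1) * ∫ τ in (0:ℝ)..r, f τ) ≤ 1 := by
      rw [Real.exp_le_one_iff]
      nlinarith [mul_nonneg hγ1.le (hpos r hr)]
    have hE0 := Real.exp_pos (-(γ - 1) * ∫ τ in (0:ℝ)..r, f τ)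
    have hS : 0 < 1 - (1 - μ2 ^ 2 * T₀ ^ 2) * Real.exp (-(γ - 1) * ∫ τ in (0:ℝ)..r, f τ) := by
      rw [hc]
      have h5 : 0 < (μ2 * T₀) ^ 2 := by positivity
      have h6 : (μ2 * T₀) ^ 2 < 1 := by nlinarith
      nlinarith
    have hD := ((hE.sqrt hS.ne').sub_const μ2).const_mul ((γ + 1) / 2)
    have htf : t = fun r => ((γ + 1) / 2) * (Real.sqrt (1 - (1 - μ2 ^ 2 * T₀ ^ 2) *
        Real.exp (-(γ - 1) * ∫ τ in (0:ℝ)..r, f τ)) - μ2) := funext ht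
    have hg : γ - 1 + 2 * t r = (γ + 1) * Real.sqrt (1 - (1 - μ2 ^ 2 * T₀ ^ 2) *
        Real.exp (-(γ - 1) * ∫ τ in (0:ℝ)..r, f τ)) := by
      rw [ht r, hμ2]; field_simp; ring
    rw [hg]
    rw [← htf] at hD
    refine hD.congr_deriv (Eq.symm ?_)
    have hs0 := Real.sqrt_pos.2 hS
    have hs2 := Real.sq_sqrt hS.le
    set E := Real.exp (-(γ - 1) * ∫ τ in (0:ℝ)..r, f τ) with hEdef
    set s := Real.sqrt (1 - (1 - μ2 ^ 2 * T₀ ^ 2) * E) with hsdef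
    have hfr : f r = (w r) ^ 2 / (r * (q r) ^ 2) := rfl
    have hcE : (1 - μ2 ^ 2 * T₀ ^ 2) * E = 1 - s ^ 2 := by linarith
    have e1 : -((1 - μ2 ^ 2 * T₀ ^ 2) * (E * (-(γ - 1) * f r))) = (1 - s ^ 2) * ((γ - 1) * f r) := by
      rw [← hcE]; ring
    rw [e1, hfr]
    field_simp
    try ring
  refine ⟨?_, fun r hr => (hmain r hr).differentiableAt, fun r hr => (hmain r hr).deriv⟩
  rw [ht 0, hc]
  simp only [intervalIntegral.integral_same, mul_zero, Real.exp_zero, mul_one, sub_sub_cancel]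
  rw [Real.sqrt_sq hm0.le, hm, hμ2]
  field_simp
  ring
end

section
/- One has 1 − μ⁴T₀² ∈ (0,1), the function t is monotonically nondecreasing on [0,r₀], and t₀ ≤ t(r) < 1 for all r ∈ [0,r₀]. (Bounds on the quasi-Mach number in the proof of Lemma 2.3 of the paper; t(r) = 1/M₋²(r), so the upstream flow stays quasi-supersonic.) -/
/-- Bounds on the quasi-Mach quantity in the proof of Lemma 2.3:
`1 - μ⁴T₀² ∈ (0,1)`, `t` is monotone nondecreasing, and `t₀ ≤ t r < 1`. -/
theorem stmt_2 (γ r₀ t₀ μ2 T₀ : ℝ) (hγ : 1 < γ) (hr₀ : 0 < r₀)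
    (ht₀ : t₀ ∈ Set.Ioo (0:ℝ) 1)
    (hμ2 : μ2 = (γ - 1) / (γ + 1)) (hT₀ : T₀ = 1 + 2 * t₀ / (γ - 1))
    (w q t : ℝ → ℝ)
    (hw : ContDiffOn ℝ 1 w (Set.Icc 0 r₀))
    (hq : ContDiffOn ℝ 1 q (Set.Icc 0 r₀))
    (hw0 : w 0 = 0)
    (hqpos : ∀ r ∈ Set.Icc (0:ℝ) r₀, 0 < q r)
    (ht : ∀ r, t r = ((γ + 1) / 2) *
      (Real.sqrt (1 - (1 - μ2 ^ 2 * T₀ ^ 2) *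
        Real.exp (-(γ - 1) * ∫ τ in (0:ℝ)..r, (w τ) ^ 2 / (τ * (q τ) ^ 2))) - μ2)) :
    (1 - μ2 ^ 2 * T₀ ^ 2) ∈ Set.Ioo (0:ℝ) 1 ∧
    MonotoneOn t (Set.Icc 0 r₀) ∧
    ∀ r ∈ Set.Icc (0:ℝ) r₀, t₀ ≤ t r ∧ t r < 1 := by
  have hg1 : 0 < γ + 1 := by linarith
  have hg0 : 0 < γ - 1 := by linarith
  obtain ⟨h0, h1⟩ := ht₀
  set f : ℝ → ℝ := fun τ => (w τ) ^ 2 / (τ * (q τ) ^ 2) with hf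
  have hfc : ContinuousOn f (Set.Icc 0 r₀) := by
    intro x hx
    have hwx := hw.continuousOn x hx
    have hqx := hq.continuousOn x hx
    have hqp := hqpos x hx
    rcases eq_or_lt_of_le hx.1 with h | h
    · subst h
      have hd := ((hw.differentiableOn (by norm_num)) 0 hx).hasDerivWithinAt
      rw [hasDerivWithinAt_iff_tendsto_slope] at hd
      rw [← continuousWithinAt_sdiff_self]
      have hw' : Filter.Tendsto w (nhdsWithin 0 (Set.Icc 0 r₀ \ {0})) (nhds (w 0)) :=
        hwx.mono Set.sdiff_subset
      have hq' : Filter.Tendsto q (nhdsWithin 0 (Set.Icc 0 r₀ \ {0})) (nhds (q 0)) :=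
        hqx.mono Set.sdiff_subset
      have hl := (hw'.mul hd).div (hq'.pow 2) (by positivity)
      have hz : f 0 = w 0 * derivWithin w (Set.Icc 0 r₀) 0 / q 0 ^ 2 := by simp [hf, hw0]
      unfold ContinuousWithinAt
      rw [hz]
      refine hl.congr' ?_
      filter_upwards [self_mem_nhdsWithin] with y hy
      have hy0 : y ≠ 0 := hy.2
      have := hqpos y hy.1
      simp only [Pi.div_apply, hf, slope_def_field, hw0, sub_zero]
      field_simp
    · exact (hwx.pow 2).div (continuousWithinAt_id.mul (hqx.pow 2))
        (by positivity)
  have hfn : ∀ x ∈ Set.Icc (0:ℝ) r₀, 0 ≤ f x := fun x hx =>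
    div_nonneg (sq_nonneg _) (mul_nonneg hx.1 (sq_nonneg _))
  have hint : ∀ a b : ℝ, 0 ≤ a → a ≤ b → b ≤ r₀ →
      IntervalIntegrable f MeasureTheory.volume a b := by
    intro a b ha hab hb
    apply ContinuousOn.intervalIntegrable
    rw [Set.uIcc_of_le hab]
    exact hfc.mono (Set.Icc_subset_Icc ha hb)
  have hmono : ∀ a b : ℝ, 0 ≤ a → a ≤ b → b ≤ r₀ →
      ∫ τ in (0:ℝ)..a, f τ ≤ ∫ τ in (0:ℝ)..b, f τ := by
    intro a b ha hab hb
    rw [← intervalIntegral.integral_add_adjacent_intervals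
      (hint 0 a le_rfl ha (hab.trans hb)) (hint a b ha hab hb)]
    have : 0 ≤ ∫ τ in a..b, f τ := intervalIntegral.integral_nonneg hab
      (fun x hx => hfn x ⟨ha.trans hx.1, hx.2.trans hb⟩)
    linarith
  have hA : μ2 * T₀ = (γ - 1 + 2 * t₀) / (γ + 1) := by
    rw [hμ2, hT₀]; field_simp
  have hA0 : 0 < μ2 * T₀ := by rw [hA]; positivity
  have hA1 : μ2 * T₀ < 1 := by rw [hA, div_lt_one hg1]; linarith
  have hk : (1 - μ2 ^ 2 * T₀ ^ 2) ∈ Set.Ioo (0:ℝ) 1 := by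
    rw [← mul_pow]; constructor <;> nlinarith
  have hm : MonotoneOn t (Set.Icc 0 r₀) := by
    intro a ha b hb hab
    have := hmono a b ha.1 hab hb.2
    rw [ht a, ht b]
    have h2 : -(γ - 1) * ∫ τ in (0:ℝ)..b, f τ ≤ -(γ - 1) * ∫ τ in (0:ℝ)..a, f τ := by
      nlinarith
    have h3 := mul_le_mul_of_nonneg_left (Real.exp_le_exp.2 h2) hk.1.le
    apply mul_le_mul_of_nonneg_left _ (by positivity)
    apply sub_le_sub_right
    apply Real.sqrt_le_sqrt
    linarith
  refine ⟨hk, hm, fun r hr => ⟨?_, ?_⟩⟩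
  · have h2 := hm ⟨le_rfl, hr₀.le⟩ hr hr.1
    have h3 : t 0 = t₀ := by
      rw [ht 0, intervalIntegral.integral_same, mul_zero, Real.exp_zero, mul_one, sub_sub_cancel,
        ← mul_pow, Real.sqrt_sq hA0.le, hA, hμ2]
      field_simp
      ring
    linarith
  · rw [ht r]
    have h2 : Real.sqrt (1 - (1 - μ2 ^ 2 * T₀ ^ 2) *
        Real.exp (-(γ - 1) * ∫ τ in (0:ℝ)..r, f τ)) < 1 := by
      rw [Real.sqrt_lt' one_pos]
      have := mul_pos hk.1 (Real.exp_pos (-(γ - 1) * ∫ τ in (0:ℝ)..r, f τ))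
      linarith
    have h3 : (γ + 1) / 2 * (1 - μ2) = 1 := by
      rw [hμ2]; field_simp; ring
    refine lt_of_lt_of_eq ?_ h3
    exact mul_lt_mul_of_pos_left (sub_lt_sub_right h2 _) (by positivity)
end

section
/- Assume ∂_r p(r) = ρ(r) w(r)²/r for all r ∈ (0,r₀). Then the equation ∂_r ( γp/(ρq²) )(r) = ((γ−1)/(4q(r)²)) · (w(r)²/r) · ( (γ+1)²/(γ−1 + 2γp/(ρq²)) − (γ−1 + 2γp/(ρq²)) ) holds on (0,r₀) if and only if the equation ∂_r (1/q²)(r) = (1/q(r)²) · [ ((γ−1)²/4) · (w(r)²/r) · (ρ/(γp)) · ( (γ+1)²/( (γ−1)² (1 + (2γp)/((γ−1)ρq²)) ) − (1 + (2γp)/((γ−1)ρq²)) ) − (ρ/(γp)) · ∂_r(γp/ρ)(r) ] holds on (0,r₀). (Lemma 2.4 of the paper.) -/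
/-- Lemma 2.4: assuming `∂_r p = ρ w² / r`, the ODE for `γp/(ρq²)` is
equivalent to the ODE for `1/q²`. -/
theorem stmt_3 (γ r₀ : ℝ) (hγ : 1 < γ) (hr₀ : 0 < r₀)
    (p ρ q w : ℝ → ℝ)
    (hp_diff : ∀ r ∈ Set.Ioo (0:ℝ) r₀, DifferentiableAt ℝ p r)
    (hρ_diff : ∀ r ∈ Set.Ioo (0:ℝ) r₀, DifferentiableAt ℝ ρ r)
    (hq_diff : ∀ r ∈ Set.Ioo (0:ℝ) r₀, DifferentiableAt ℝ q r)
    (hw_diff : ∀ r ∈ Set.Ioo (0:ℝ) r₀, DifferentiableAt ℝ w r)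
    (hp_pos : ∀ r ∈ Set.Ioo (0:ℝ) r₀, 0 < p r)
    (hρ_pos : ∀ r ∈ Set.Ioo (0:ℝ) r₀, 0 < ρ r)
    (hq_pos : ∀ r ∈ Set.Ioo (0:ℝ) r₀, 0 < q r)
    (hup : ∀ r ∈ Set.Ioo (0:ℝ) r₀, deriv p r = ρ r * (w r) ^ 2 / r) :
    (∀ r ∈ Set.Ioo (0:ℝ) r₀,
      deriv (fun s => γ * p s / (ρ s * (q s) ^ 2)) r =
        (γ - 1) / (4 * (q r) ^ 2) * ((w r) ^ 2 / r) *
          ((γ + 1) ^ 2 / (γ - 1 + 2 * γ * p r / (ρ r * (q r) ^ 2)) -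
            (γ - 1 + 2 * γ * p r / (ρ r * (q r) ^ 2)))) ↔
    (∀ r ∈ Set.Ioo (0:ℝ) r₀,
      deriv (fun s => 1 / (q s) ^ 2) r =
        (1 / (q r) ^ 2) *
          ((γ - 1) ^ 2 / 4 * ((w r) ^ 2 / r) * (ρ r / (γ * p r)) *
            ((γ + 1) ^ 2 /
                ((γ - 1) ^ 2 * (1 + (2 * γ * p r) / ((γ - 1) * ρ r * (q r) ^ 2))) -
              (1 + (2 * γ * p r) / ((γ - 1) * ρ r * (q r) ^ 2)))
            - (ρ r / (γ * p r)) * deriv (fun s => γ * p s / ρ s) r)) := by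
  refine forall₂_congr fun r hr => ?_
  have hp := hp_pos r hr
  have hρ := hρ_pos r hr
  have hq := hq_pos r hr
  have hg : 0 < γ - 1 := by linarith
  have hγ0 : 0 < γ := by linarith
  have hA : DifferentiableAt ℝ (fun s => γ * p s / ρ s) r :=
    ((hp_diff r hr).const_mul γ).fun_div (hρ_diff r hr) hρ.ne'
  have hB : DifferentiableAt ℝ (fun s => 1 / (q s) ^ 2) r :=
    (differentiableAt_const (1:ℝ)).fun_div ((hq_diff r hr).fun_pow 2) (by positivity)
  have hfun : (fun s => γ * p s / (ρ s * (q s) ^ 2)) =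
      fun s => (γ * p s / ρ s) * (1 / (q s) ^ 2) := by
    funext s
    rw [div_mul_div_comm, mul_one]
  have hd : deriv (fun s => γ * p s / (ρ s * (q s) ^ 2)) r =
      deriv (fun s => γ * p s / ρ s) r * (1 / (q r) ^ 2) +
        (γ * p r / ρ r) * deriv (fun s => 1 / (q s) ^ 2) r := by
    rw [hfun]
    exact deriv_fun_mul hA hB
  rw [hd]
  generalize deriv (fun s => γ * p s / ρ s) r = A'
  generalize deriv (fun s => 1 / (q s) ^ 2) r = B'
  generalize (w r) ^ 2 / r = W
  have hX : γ - 1 + 2 * γ * p r / (ρ r * (q r) ^ 2) =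
      (γ - 1) * (1 + (2 * γ * p r) / ((γ - 1) * ρ r * (q r) ^ 2)) := by
    field_simp
  rw [hX]
  have hY : 0 < 1 + (2 * γ * p r) / ((γ - 1) * ρ r * (q r) ^ 2) := by positivity
  generalize 1 + (2 * γ * p r) / ((γ - 1) * ρ r * (q r) ^ 2) = Y at hY
  have hA0 : 0 < γ * p r / ρ r := by positivity
  have hinv : ρ r / (γ * p r) = (γ * p r / ρ r)⁻¹ := by rw [inv_div]
  rw [hinv]
  generalize γ * p r / ρ r = A at hA0
  have hrhs : (γ - 1) / (4 * (q r) ^ 2) * W * ((γ + 1) ^ 2 / ((γ - 1) * Y) - (γ - 1) * Y) =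
      A' * (1 / (q r) ^ 2) + A * ((1 / (q r) ^ 2) *
        ((γ - 1) ^ 2 / 4 * W * A⁻¹ * ((γ + 1) ^ 2 / ((γ - 1) ^ 2 * Y) - Y) - A⁻¹ * A')) := by
    field_simp
    ring
  rw [hrhs, add_right_inj, mul_right_inj' hA0.ne']
end

section
/- The function Y satisfies Y(0) = Y₀, Y is differentiable on (0,r₀) with ∂_r Y(r) = ((γ−1)/2) · (w(r)²/r) · (1 − μ⁴Y(r)²)/(μ⁴ Y(r)), Y is monotonically nondecreasing, and 1 < Y₀ ≤ Y(r) < (γ+1)/(γ−1) for all r ∈ [0,r₀]. (Solution formula and bounds in the proof of Lemma 2.5 of the paper.) -/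
/-- Solution formula and bounds in the proof of Lemma 2.5: `Y 0 = Y₀`, `Y`
solves the ODE `∂_r Y = ((γ-1)/2)(w²/r)(1-μ⁴Y²)/(μ⁴Y)`, is monotone, and
`1 < Y₀ ≤ Y r < (γ+1)/(γ-1)`. -/
theorem stmt_4 (γ r₀ Y₀ μ2 : ℝ) (hγ : 1 < γ) (hr₀ : 0 < r₀)
    (hμ2 : μ2 = (γ - 1) / (γ + 1))
    (hY₀ : Y₀ ∈ Set.Ioo 1 ((γ + 1) / (γ - 1)))
    (w W Y : ℝ → ℝ)
    (hWcont : ContinuousOn W (Set.Icc 0 r₀))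
    (hWeq : ∀ τ ∈ Set.Ioc (0:ℝ) r₀, W τ = (w τ) ^ 2 / τ)
    (hY : ∀ r, Y r = (1 / μ2) * Real.sqrt (1 - (1 - μ2 ^ 2 * Y₀ ^ 2) *
      Real.exp (-(γ - 1) * ∫ τ in (0:ℝ)..r, W τ))) :
    Y 0 = Y₀ ∧
    (∀ r ∈ Set.Ioo (0:ℝ) r₀, DifferentiableAt ℝ Y r) ∧
    (∀ r ∈ Set.Ioo (0:ℝ) r₀,
      deriv Y r = ((γ - 1) / 2) * ((w r) ^ 2 / r) *
        (1 - μ2 ^ 2 * (Y r) ^ 2) / (μ2 ^ 2 * Y r)) ∧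
    MonotoneOn Y (Set.Icc 0 r₀) ∧
    ∀ r ∈ Set.Icc (0:ℝ) r₀, 1 < Y₀ ∧ Y₀ ≤ Y r ∧ Y r < (γ + 1) / (γ - 1) := by
  obtain ⟨h1, h2⟩ := hY₀
  have hg : 0 < γ - 1 := by linarith
  have hg' : 0 < γ + 1 := by linarith
  have hm : 0 < μ2 := by rw [hμ2]; positivity
  have hinv : (γ + 1) / (γ - 1) = 1 / μ2 := by rw [hμ2, one_div_div]
  rw [hinv] at h2 ⊢
  have hmY : μ2 * Y₀ < 1 := by
    rw [lt_div_iff₀ hm] at h2; linarith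
  have hmY0 : 0 < μ2 * Y₀ := by positivity
  have hc : 0 < 1 - μ2 ^ 2 * Y₀ ^ 2 := by nlinarith
  have hc1 : 1 - μ2 ^ 2 * Y₀ ^ 2 < 1 := by nlinarith
  have hii : ∀ a ∈ Set.Icc (0:ℝ) r₀, ∀ b ∈ Set.Icc (0:ℝ) r₀,
      IntervalIntegrable W MeasureTheory.volume a b := fun a ha b hb =>
    (hWcont.mono (Set.uIcc_subset_Icc ha hb)).intervalIntegrable
  have h0 : (0:ℝ) ∈ Set.Icc (0:ℝ) r₀ := ⟨le_rfl, hr₀.le⟩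
  have hImono : ∀ a ∈ Set.Icc (0:ℝ) r₀, ∀ b ∈ Set.Icc (0:ℝ) r₀, a ≤ b →
      (∫ τ in (0:ℝ)..a, W τ) ≤ ∫ τ in (0:ℝ)..b, W τ := by
    intro a ha b hb hab
    rw [← intervalIntegral.integral_add_adjacent_intervals (hii 0 h0 a ha) (hii a ha b hb)]
    have : 0 ≤ ∫ τ in a..b, W τ := by
      rw [intervalIntegral.integral_of_le hab]
      refine MeasureTheory.setIntegral_nonneg measurableSet_Ioc fun x hx => ?_
      have hx0 : 0 < x := lt_of_le_of_lt ha.1 hx.1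
      rw [hWeq x ⟨hx0, hx.2.trans hb.2⟩]
      positivity
    linarith
  have hY0 : Y 0 = Y₀ := by
    rw [hY]
    simp only [intervalIntegral.integral_same, mul_zero, Real.exp_zero, mul_one]
    rw [show 1 - (1 - μ2 ^ 2 * Y₀ ^ 2) = (μ2 * Y₀) ^ 2 by ring, Real.sqrt_sq hmY0.le]
    field_simp
  have hmono : MonotoneOn Y (Set.Icc 0 r₀) := by
    intro a ha b hb hab
    rw [hY a, hY b]
    have hI := hImono a ha b hb hab
    have hE : Real.exp (-(γ - 1) * ∫ τ in (0:ℝ)..b, W τ) ≤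
        Real.exp (-(γ - 1) * ∫ τ in (0:ℝ)..a, W τ) := Real.exp_le_exp.2 (by nlinarith)
    have := mul_le_mul_of_nonneg_left hE hc.le
    exact mul_le_mul_of_nonneg_left (Real.sqrt_le_sqrt (by linarith)) (by positivity)
  have hD : ∀ r ∈ Set.Ioo (0:ℝ) r₀, HasDerivAt Y (((γ - 1) / 2) * ((w r) ^ 2 / r) *
        (1 - μ2 ^ 2 * (Y r) ^ 2) / (μ2 ^ 2 * Y r)) r := by
    intro r hr
    have hrI : r ∈ Set.Icc (0:ℝ) r₀ := ⟨hr.1.le, hr.2.le⟩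
    have hI : HasDerivAt (fun r => ∫ τ in (0:ℝ)..r, W τ) (W r) r :=
      intervalIntegral.integral_hasDerivAt_right (hii 0 h0 r hrI)
        ((hWcont.mono Set.Ioo_subset_Icc_self).stronglyMeasurableAtFilter isOpen_Ioo r hr)
        (hWcont.continuousAt (Icc_mem_nhds hr.1 hr.2))
    have hI0 := hImono 0 h0 r hrI hr.1.le
    rw [intervalIntegral.integral_same] at hI0
    have hE1 : Real.exp (-(γ - 1) * ∫ τ in (0:ℝ)..r, W τ) ≤ 1 :=
      Real.exp_le_one_iff.2 (by nlinarith)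
    have hS : 0 < 1 - (1 - μ2 ^ 2 * Y₀ ^ 2) *
        Real.exp (-(γ - 1) * ∫ τ in (0:ℝ)..r, W τ) := by
      have := mul_le_mul_of_nonneg_left hE1 hc.le
      linarith
    have hder := ((((hI.const_mul (-(γ - 1))).exp.const_mul
      (1 - μ2 ^ 2 * Y₀ ^ 2)).const_sub 1).sqrt hS.ne').const_mul (1 / μ2)
    rw [funext hY]
    refine hder.congr_deriv ?_
    have hq := Real.sqrt_pos.2 hS
    have hsq := Real.sq_sqrt hS.le
    rw [← hWeq r ⟨hr.1, hr.2.le⟩, mul_pow, hsq]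
    field_simp
    ring
  refine ⟨hY0, fun r hr => (hD r hr).differentiableAt, fun r hr => (hD r hr).deriv, hmono,
    fun r hr => ⟨h1, hY0 ▸ hmono h0 hr hr.1, ?_⟩⟩
  rw [hY]
  have hlt : Real.sqrt (1 - (1 - μ2 ^ 2 * Y₀ ^ 2) *
      Real.exp (-(γ - 1) * ∫ τ in (0:ℝ)..r, W τ)) < 1 := by
    rw [Real.sqrt_lt' one_pos]
    have := mul_pos hc (Real.exp_pos (-(γ - 1) * ∫ τ in (0:ℝ)..r, W τ))
    linarith
  have hp : 0 < 1 / μ2 := by positivity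
  nlinarith
end

section
/- The pressure p is differentiable on (0,r₀) and satisfies ∂_r p(r) = ρ(r) w(r)²/r, the upstream quasi-Mach number satisfies M₋²(r) = ρ(r)q(r)²/(γ p(r)) = 1/t(r) > 1, and the downstream Rankine–Hugoniot state satisfies ∂_r p₊(r) = ρ₊(r) w₊(r)²/r for all r ∈ (0,r₀). (Existence part of Theorem 2.1 of the paper: the constructed special shock solution with nonzero swirl satisfies both radial momentum equations.) -/
open Set Filter Topology in
lemma aux_cont {w : ℝ → ℝ} {r₀ : ℝ} (hr₀ : 0 < r₀)
    (hw : ContDiffOn ℝ 1 w (Icc 0 r₀)) (hw0 : w 0 = 0) :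
    ContinuousOn (fun τ => (w τ) ^ 2 / τ) (Icc 0 r₀) := by
  have hc := hw.continuousOn
  intro x hx
  rcases eq_or_lt_of_le hx.1 with h | h
  · subst h
    rw [← continuousWithinAt_sdiff_self]
    have hd := ((hw.differentiableOn (by norm_num)) 0 hx).hasDerivWithinAt
    rw [hasDerivWithinAt_iff_tendsto_slope] at hd
    have h1 : Tendsto w (𝓝[Icc 0 r₀ \ {0}] 0) (𝓝 (w 0)) :=
      (hc 0 hx).mono sdiff_subset
    have h2 := h1.mul hd
    rw [hw0, zero_mul] at h2
    unfold ContinuousWithinAt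
    simp only [div_zero]
    refine h2.congr ?_
    intro τ
    rw [slope_def_field, hw0]
    ring
  · exact ((hc x hx).pow 2).div continuousWithinAt_id h.ne'

open Set Filter Topology in
lemma aux_int {f : ℝ → ℝ} {r₀ : ℝ} 
    (hf : ContinuousOn f (Icc 0 r₀)) :
    (∀ r ∈ Ioo 0 r₀, HasDerivAt (fun r => ∫ τ in (0:ℝ)..r, f τ) (f r) r) := by
  intro r hr
  have hn : Icc 0 r₀ ∈ 𝓝 r := Icc_mem_nhds hr.1 hr.2
  refine intervalIntegral.integral_hasDerivAt_right ?_ ?_ (hf.continuousAt hn)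
  · refine (hf.mono ?_).intervalIntegrable
    rw [uIcc_of_le hr.1.le]
    exact Icc_subset_Icc_right hr.2.le
  · exact (hf.mono Ioo_subset_Icc_self).stronglyMeasurableAtFilter isOpen_Ioo r hr

open Set Filter Topology in
lemma aux_int_cont {f : ℝ → ℝ} {r₀ : ℝ} (hr₀ : 0 < r₀)
    (hf : ContinuousOn f (Icc 0 r₀)) :
    ContinuousOn (fun r => ∫ τ in (0:ℝ)..r, f τ) (Icc 0 r₀) := by
  have := intervalIntegral.continuousOn_primitive_interval (f := f) (a := 0) (b := r₀)
    (μ := MeasureTheory.volume) (by rw [uIcc_of_le hr₀.le]; exact hf.integrableOn_Icc)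
  rwa [uIcc_of_le hr₀.le] at this

/-- Existence part of Theorem 2.1: the constructed special shock solution with
nonzero swirl satisfies the upstream radial momentum equation, is
quasi-supersonic (`M₋² = 1/t > 1`), and the downstream Rankine–Hugoniot state
satisfies the downstream radial momentum equation. -/
theorem stmt_5 (γ r₀ t₀ p₀ μ2 T₀ : ℝ) (hγ : 1 < γ) (hr₀ : 0 < r₀)
    (ht₀ : t₀ ∈ Set.Ioo (0:ℝ) 1) (hp₀ : 0 < p₀)
    (hμ2 : μ2 = (γ - 1) / (γ + 1)) (hT₀ : T₀ = 1 + 2 * t₀ / (γ - 1))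
    (w q t p ρ c2 M2 pp qp ρp wp : ℝ → ℝ)
    (hw : ContDiffOn ℝ 1 w (Set.Icc 0 r₀))
    (hq : ContDiffOn ℝ 1 q (Set.Icc 0 r₀))
    (hw0 : w 0 = 0)
    (hqpos : ∀ r ∈ Set.Icc (0:ℝ) r₀, 0 < q r)
    (ht : ∀ r, t r = ((γ + 1) / 2) *
      (Real.sqrt (1 - (1 - μ2 ^ 2 * T₀ ^ 2) *
        Real.exp (-(γ - 1) * ∫ τ in (0:ℝ)..r, (w τ) ^ 2 / (τ * (q τ) ^ 2))) - μ2))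
    (hp : ∀ r, p r = p₀ *
      Real.exp (γ * ∫ τ in (0:ℝ)..r, (w τ) ^ 2 / (τ * t τ * (q τ) ^ 2)))
    (hρ : ∀ r, ρ r = γ * p r / (t r * (q r) ^ 2))
    (hc2 : ∀ r, c2 r = γ * p r / ρ r)
    (hM2 : ∀ r, M2 r = ρ r * (q r) ^ 2 / (γ * p r))
    (hpp : ∀ r, pp r = ((1 + μ2) * M2 r - μ2) * p r)
    (hqp : ∀ r, qp r = μ2 * (q r + (2 / (γ - 1)) * c2 r / q r))
    (hρp : ∀ r, ρp r = ρ r * q r / qp r)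
    (hwp : ∀ r, wp r = w r) :
    (∀ r ∈ Set.Ioo (0:ℝ) r₀,
      DifferentiableAt ℝ p r ∧ deriv p r = ρ r * (w r) ^ 2 / r) ∧
    (∀ r ∈ Set.Ioo (0:ℝ) r₀, M2 r = 1 / t r ∧ 1 < M2 r) ∧
    (∀ r ∈ Set.Ioo (0:ℝ) r₀, deriv pp r = ρp r * (wp r) ^ 2 / r) := by
  have hg1 : 0 < γ - 1 := by linarith
  have hg2 : 0 < γ + 1 := by linarith
  obtain ⟨ht0, ht1⟩ := ht₀
  have hμT : μ2 * T₀ = (γ - 1 + 2 * t₀) / (γ + 1) := by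
    rw [hμ2, hT₀]; field_simp
  have hμ0 : 0 < μ2 := by rw [hμ2]; positivity
  have hμT1 : μ2 < μ2 * T₀ := by
    rw [hμT, hμ2]; gcongr; linarith
  have hμT2 : μ2 * T₀ < 1 := by
    rw [hμT, div_lt_one hg2]; linarith
  set A : ℝ := 1 - μ2 ^ 2 * T₀ ^ 2 with hA
  have hA0 : 0 < A := by rw [hA]; nlinarith
  have hA1 : A < 1 - μ2 ^ 2 := by rw [hA]; nlinarith
  have hwq : ContinuousOn (fun τ => (w τ) ^ 2 / (τ * (q τ) ^ 2)) (Set.Icc 0 r₀) := by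
    have h1 := (aux_cont hr₀ hw hw0).div (hq.continuousOn.pow 2)
      (fun x hx => (pow_pos (hqpos x hx) 2).ne')
    refine h1.congr (fun x _ => ?_)
    simp only [div_div, Pi.div_apply, Pi.pow_apply]
  set I : ℝ → ℝ := fun r => ∫ τ in (0:ℝ)..r, (w τ) ^ 2 / (τ * (q τ) ^ 2) with hI
  have hI0 : ∀ r ∈ Set.Icc (0:ℝ) r₀, 0 ≤ I r := by
    intro r hr
    refine intervalIntegral.integral_nonneg hr.1 (fun u hu => ?_)
    have := hu.1
    positivity
  set s : ℝ → ℝ := fun r => Real.sqrt (1 - A * Real.exp (-(γ - 1) * I r)) with hs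
  have ht' : ∀ r, t r = ((γ + 1) / 2) * (s r - μ2) := ht
  have harg : ∀ r ∈ Set.Icc (0:ℝ) r₀, μ2 ^ 2 < 1 - A * Real.exp (-(γ - 1) * I r) := by
    intro r hr
    have h1 : Real.exp (-(γ - 1) * I r) ≤ 1 := by
      rw [Real.exp_le_one_iff]
      nlinarith [mul_nonneg hg1.le (hI0 r hr)]
    nlinarith
  have hsμ : ∀ r ∈ Set.Icc (0:ℝ) r₀, μ2 < s r := fun r hr =>
    Real.lt_sqrt_of_sq_lt (harg r hr)
  have hs1 : ∀ r, s r < 1 := by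
    intro r
    rw [hs]
    simp only
    rw [Real.sqrt_lt' one_pos]
    have := mul_pos hA0 (Real.exp_pos (-(γ - 1) * I r))
    linarith
  have htpos : ∀ r ∈ Set.Icc (0:ℝ) r₀, 0 < t r := by
    intro r hr
    rw [ht']
    have := hsμ r hr
    exact mul_pos (by linarith) (by linarith)
  have htlt : ∀ r, t r < 1 := by
    intro r
    have e : (γ + 1) / 2 * (1 - μ2) = 1 := by rw [hμ2]; field_simp; ring
    rw [ht']
    have := hs1 r
    have := mul_lt_mul_of_pos_left (sub_lt_sub_right this μ2) (half_pos hg2)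
    linarith
  have hppos : ∀ r, 0 < p r := by
    intro r; rw [hp]; positivity
  have hIc : ContinuousOn I (Set.Icc 0 r₀) := aux_int_cont hr₀ hwq
  have htc : ContinuousOn t (Set.Icc 0 r₀) := by
    have : t = fun r => ((γ + 1) / 2) *
      (Real.sqrt (1 - A * Real.exp (-(γ - 1) * I r)) - μ2) := funext ht'
    rw [this]
    fun_prop
  have hwt : ContinuousOn (fun τ => (w τ) ^ 2 / (τ * t τ * (q τ) ^ 2)) (Set.Icc 0 r₀) := by
    have h1 := hwq.div htc (fun x hx => (htpos x hx).ne')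
    refine h1.congr (fun x _ => ?_)
    simp only [div_div, Pi.div_apply]
    congr 1; ring
  have hpd : ∀ r ∈ Set.Ioo (0:ℝ) r₀, HasDerivAt p (ρ r * (w r) ^ 2 / r) r := by
    intro r hr
    have h1 := (((aux_int hwt r hr).const_mul γ).exp).const_mul p₀
    have h2 : p = fun r => p₀ *
      Real.exp (γ * ∫ τ in (0:ℝ)..r, (w τ) ^ 2 / (τ * t τ * (q τ) ^ 2)) := funext hp
    rw [← h2] at h1
    refine h1.congr_deriv ?_
    symm
    rw [hρ, ← mul_assoc p₀, ← hp r]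
    have := (htpos r ⟨hr.1.le, hr.2.le⟩).ne'
    have := (hqpos r ⟨hr.1.le, hr.2.le⟩).ne'
    have := hr.1.ne'
    field_simp
  have hMt : ∀ r ∈ Set.Ioo (0:ℝ) r₀, M2 r = 1 / t r := by
    intro r hr
    have := (htpos r ⟨hr.1.le, hr.2.le⟩).ne'
    have := (hqpos r ⟨hr.1.le, hr.2.le⟩).ne'
    have := (hppos r).ne'
    have : γ ≠ 0 := by linarith
    rw [hM2, hρ]
    field_simp
  refine ⟨fun r hr => ⟨(hpd r hr).differentiableAt, (hpd r hr).deriv⟩,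
    fun r hr => ⟨hMt r hr, ?_⟩, ?_⟩
  · rw [hMt r hr, lt_div_iff₀ (htpos r ⟨hr.1.le, hr.2.le⟩), one_mul]
    exact htlt r
  · intro r hr
    have hr' : r ∈ Set.Icc (0:ℝ) r₀ := ⟨hr.1.le, hr.2.le⟩
    have htr := (htpos r hr').ne'
    have hqr := (hqpos r hr').ne'
    have hpr := (hppos r).ne'
    have hrr := hr.1.ne'
    have hg0 : γ ≠ 0 := by linarith
    have hspos : 0 < s r := hμ0.trans (hsμ r hr')
    have hargpos : 0 < 1 - A * Real.exp (-(γ - 1) * I r) :=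
      lt_trans (by positivity) (harg r hr')
    have hssq : s r ^ 2 = 1 - A * Real.exp (-(γ - 1) * I r) := Real.sq_sqrt hargpos.le
    have hsd : HasDerivAt s ((γ - 1) * ((w r) ^ 2 / (r * (q r) ^ 2)) * (1 - s r ^ 2) / (2 * s r)) r := by
      have h1 := (((((aux_int hwq r hr).const_mul (-(γ - 1))).exp).const_mul A).const_sub 1).sqrt
        hargpos.ne'
      convert h1 using 1
      rw [hssq]
      congr 1
      simp only [hI]
      ring
    have htd : HasDerivAt t ((γ + 1) / 2 *
        ((γ - 1) * ((w r) ^ 2 / (r * (q r) ^ 2)) * (1 - s r ^ 2) / (2 * s r))) r := by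
      rw [show t = fun r => ((γ + 1) / 2) * (s r - μ2) from funext ht']
      exact (hsd.sub_const μ2).const_mul _
    have hqp' : qp r = q r * s r := by
      have hc : c2 r = t r * q r ^ 2 := by
        rw [hc2, hρ]; field_simp
      rw [hqp, hc, ht', hμ2]
      field_simp
      ring
    have hev : pp =ᶠ[nhds r] fun x => ((1 + μ2) * (t x)⁻¹ - μ2) * p x := by
      filter_upwards [Ioo_mem_nhds hr.1 hr.2] with x hx
      rw [hpp, hMt x hx, one_div]
    rw [hev.deriv_eq, ((((htd.fun_inv htr).const_mul (1 + μ2)).sub_const μ2).fun_mul (hpd r hr)).deriv]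
    rw [hρp, hqp', hρ, hwp]
    have hst : s r = 2 * t r / (γ + 1) + μ2 := by
      rw [ht']; field_simp; ring
    have hsne := hspos.ne'
    have key : -(1 + μ2) * ((γ + 1) / 2) * (γ - 1) * (1 - s r ^ 2) / 2
        + ((1 + μ2) - μ2 * t r) * γ * s r = γ * t r := by
      rw [hst, hμ2]; field_simp; ring
    have e1 : γ * p r / (t r * q r ^ 2) * q r / (q r * s r) * w r ^ 2 / r
       = (γ * t r) * (p r * w r ^ 2 / (t r ^ 2 * q r ^ 2 * s r * r)) := by
      field_simp
    rw [e1, ← key]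
    field_simp
end

section
/- Let δ > 0 and let w : [0,δ) → ℝ be five times continuously differentiable with w(0) = 0. Then the fourth derivative of the function r ↦ w(r)²/r on (0,δ) converges as r → 0⁺, and lim_{r→0⁺} (d/dr)⁴ ( w(r)²/r ) = 2 w'(0) w⁽⁴⁾(0) + 4 w''(0) w'''(0), which equals (1/5) times the fifth derivative of w² at 0. (Equation (3.52) in the proof of Lemma 3.1 of the paper; in particular the limit is 0 when w''(0) = w⁽⁴⁾(0) = 0.) -/
lemma aux_hd (δ : ℝ) (f : ℝ → ℝ) (hf : ContDiffOn ℝ 5 f (Set.Ico 0 δ)) (k : ℕ) (hk : k < 5)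
    (x : ℝ) (hx : x ∈ Set.Ico 0 δ) :
    HasDerivWithinAt (iteratedDerivWithin k f (Set.Ico 0 δ))
      (iteratedDerivWithin (k+1) f (Set.Ico 0 δ) x) (Set.Ico 0 δ) x := by
  rw [iteratedDerivWithin_succ]
  exact ((hf.differentiableOn_iteratedDerivWithin (by exact_mod_cast hk)
    (uniqueDiffOn_Ico 0 δ)) x hx).hasDerivWithinAt

lemma aux_step (δ : ℝ) (f g h : ℝ → ℝ) (k : ℕ)
    (he : Set.EqOn (iteratedDerivWithin k f (Set.Ico 0 δ)) g (Set.Ico 0 δ))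
    (hg : ∀ x ∈ Set.Ico 0 δ, HasDerivWithinAt g (h x) (Set.Ico 0 δ) x) :
    Set.EqOn (iteratedDerivWithin (k+1) f (Set.Ico 0 δ)) h (Set.Ico 0 δ) := by
  intro x hx
  rw [iteratedDerivWithin_succ, derivWithin_congr he (he hx)]
  exact (hg x hx).derivWithin (uniqueDiffOn_Ico 0 δ x hx)

lemma aux_step' (δ : ℝ) (f g h : ℝ → ℝ) (k : ℕ)
    (he : Set.EqOn (iteratedDeriv k f) g (Set.Ioo 0 δ))
    (hg : ∀ x ∈ Set.Ioo 0 δ, HasDerivAt g (h x) x) :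
    Set.EqOn (iteratedDeriv (k+1) f) h (Set.Ioo 0 δ) := by
  intro x hx
  rw [iteratedDeriv_succ]
  have : iteratedDeriv k f =ᶠ[nhds x] g := he.eventuallyEq_of_mem (isOpen_Ioo.mem_nhds hx)
  rw [this.deriv_eq]
  exact (hg x hx).deriv

lemma aux_sq (δ : ℝ) (hδ : 0 < δ) (w : ℝ → ℝ)
    (hw : ContDiffOn ℝ 5 w (Set.Ico 0 δ)) (hw0 : w 0 = 0) :
    2 * derivWithin w (Set.Ico 0 δ) 0 * iteratedDerivWithin 4 w (Set.Ico 0 δ) 0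
        + 4 * iteratedDerivWithin 2 w (Set.Ico 0 δ) 0 *
          iteratedDerivWithin 3 w (Set.Ico 0 δ) 0
      = (1 / 5) * iteratedDerivWithin 5 (fun x => (w x) ^ 2) (Set.Ico 0 δ) 0 := by
  have H := aux_hd δ w hw
  rw [← iteratedDerivWithin_one]
  have h00 : iteratedDerivWithin 0 w (Set.Ico 0 δ) = w := iteratedDerivWithin_zero
  have H0 := H 0 (by norm_num)
  have H1 := H 1 (by norm_num)
  have H2 := H 2 (by norm_num)
  have H3 := H 3 (by norm_num)
  have H4 := H 4 (by norm_num)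
  rw [h00] at H0
  simp only [zero_add, Nat.reduceAdd] at H0 H1 H2 H3 H4
  generalize iteratedDerivWithin 1 w (Set.Ico 0 δ) = w1 at *
  generalize iteratedDerivWithin 2 w (Set.Ico 0 δ) = w2 at *
  generalize iteratedDerivWithin 3 w (Set.Ico 0 δ) = w3 at *
  generalize iteratedDerivWithin 4 w (Set.Ico 0 δ) = w4 at *
  generalize iteratedDerivWithin 5 w (Set.Ico 0 δ) = w5 at *
  have e0 : Set.EqOn (iteratedDerivWithin 0 (fun x => (w x)^2) (Set.Ico 0 δ))
      (fun x => w x * w x) (Set.Ico 0 δ) := by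
    intro x hx; simp [iteratedDerivWithin_zero, sq]
  have e1 := aux_step δ _ _ (fun x => 2 * (w x * w1 x)) 0 e0 (fun x hx =>
    ((H0 x hx).mul (H0 x hx)).congr_deriv (by ring))
  have e2 := aux_step δ _ _ (fun x => 2 * (w x * w2 x + w1 x * w1 x)) 1 e1 (fun x hx =>
    (((H0 x hx).mul (H1 x hx)).const_mul 2).congr_deriv (by ring))
  have e3 := aux_step δ _ _ (fun x => 2 * (w x * w3 x + 3 * (w1 x * w2 x))) 2 e2 (fun x hx =>
    ((((H0 x hx).mul (H2 x hx)).add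
      ((H1 x hx).mul (H1 x hx))).const_mul 2).congr_deriv (by ring))
  have e4 := aux_step δ _ _ (fun x => 2 * (w x * w4 x + (4 * (w1 x * w3 x) + 3 * (w2 x * w2 x)))) 3 e3
    (fun x hx =>
    ((((H0 x hx).mul (H3 x hx)).add
      (((H1 x hx).mul (H2 x hx)).const_mul 3)).const_mul 2).congr_deriv (by ring))
  have e5 := aux_step δ _ _ (fun x => 2 * (w x * w5 x + 5 * (w1 x * w4 x) + 10 * (w2 x * w3 x))) 4 e4
    (fun x hx =>
    ((((H0 x hx).mul (H4 x hx)).add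
      ((((H1 x hx).mul (H3 x hx)).const_mul 4).add
      (((H2 x hx).mul (H2 x hx)).const_mul 3))).const_mul 2).congr_deriv (by ring))
  have := e5 (Set.left_mem_Ico.2 hδ)
  norm_num at this
  rw [this, hw0]; ring

lemma aux_lim (δ : ℝ) (hδ : 0 < δ) (f : ℝ → ℝ)
    (hf : ContDiffOn ℝ 5 f (Set.Ico 0 δ)) (hf0 : f 0 = 0) :
    Filter.Tendsto (fun r => iteratedDeriv 4 (fun x => f x / x) r)
      (nhdsWithin 0 (Set.Ioi 0))
      (nhds ((1 / 5) * iteratedDerivWithin 5 f (Set.Ico 0 δ) 0)) := by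
  have h00 : iteratedDerivWithin 0 f (Set.Ico 0 δ) = f := iteratedDerivWithin_zero
  have C (k : ℕ) (hk : k ≤ 5) : Filter.Tendsto (iteratedDerivWithin k f (Set.Ico 0 δ))
      (nhdsWithin 0 (Set.Ioi 0)) (nhds (iteratedDerivWithin k f (Set.Ico 0 δ) 0)) := by
    have := hf.continuousOn_iteratedDerivWithin (m := k) (by exact_mod_cast hk)
      (uniqueDiffOn_Ico 0 δ) 0 (Set.left_mem_Ico.2 hδ)
    rw [← nhdsWithin_Ioo_eq_nhdsGT hδ]
    exact this.mono_left (nhdsWithin_mono _ Set.Ioo_subset_Ico_self)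
  have H (k : ℕ) (hk : k < 5) (x : ℝ) (hx : x ∈ Set.Ioo 0 δ) :=
    (aux_hd δ f hf k hk x (Set.Ioo_subset_Ico_self hx)).hasDerivAt (Ico_mem_nhds hx.1 hx.2)
  have H0 := H 0 (by norm_num)
  have H1 := H 1 (by norm_num)
  have H2 := H 2 (by norm_num)
  have H3 := H 3 (by norm_num)
  have H4 := H 4 (by norm_num)
  have C0 := C 0 (by norm_num)
  have C1 := C 1 (by norm_num)
  have C2 := C 2 (by norm_num)
  have C3 := C 3 (by norm_num)
  have C4 := C 4 (by norm_num)
  have C5 := C 5 (by norm_num)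
  rw [h00] at H0 C0
  simp only [zero_add, Nat.reduceAdd] at H0 H1 H2 H3 H4
  clear H C h00
  generalize iteratedDerivWithin 1 f (Set.Ico 0 δ) = f1 at *
  generalize iteratedDerivWithin 2 f (Set.Ico 0 δ) = f2 at *
  generalize iteratedDerivWithin 3 f (Set.Ico 0 δ) = f3 at *
  generalize iteratedDerivWithin 4 f (Set.Ico 0 δ) = f4 at *
  generalize iteratedDerivWithin 5 f (Set.Ico 0 δ) = f5 at *
  have P (n : ℕ) (x : ℝ) : HasDerivAt (fun x : ℝ => x ^ n) (n * x ^ (n-1)) x := hasDerivAt_pow n x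
  have e0 : Set.EqOn (iteratedDeriv 0 (fun x => f x / x)) (fun x => f x / x ^ 1) (Set.Ioo 0 δ) := by
    intro x hx; simp [iteratedDeriv_zero]
  have e1 := aux_step' δ _ _ (fun x => (f1 x * x ^ 1 - f x) / x ^ 2) 0 e0 (fun x hx => by
    have hx0 : x ≠ 0 := hx.1.ne'
    refine ((H0 x hx).div (P 1 x) (pow_ne_zero _ hx0)).congr_deriv ?_
    norm_num)
  have e2 := aux_step' δ _ _ (fun x => (f2 x * x ^ 2 - 2 * (f1 x * x ^ 1) + 2 * f x) / x ^ 3) 1 e1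
    (fun x hx => by
    have hx0 : x ≠ 0 := hx.1.ne'
    refine ((((H1 x hx).mul (P 1 x)).sub (H0 x hx)).div (P 2 x) (pow_ne_zero _ hx0)).congr_deriv ?_
    norm_num
    field_simp
    ring)
  have e3 := aux_step' δ _ _ (fun x => (f3 x * x ^ 3 - 3 * (f2 x * x ^ 2) + 6 * (f1 x * x ^ 1)
      - 6 * f x) / x ^ 4) 2 e2
    (fun x hx => by
    have hx0 : x ≠ 0 := hx.1.ne'
    refine (((((H2 x hx).mul (P 2 x)).sub (((H1 x hx).mul (P 1 x)).const_mul 2)).add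
      ((H0 x hx).const_mul 2)).div (P 3 x) (pow_ne_zero _ hx0)).congr_deriv ?_
    norm_num
    field_simp
    ring)
  have e4 := aux_step' δ _ _ (fun x => (f4 x * x ^ 4 - 4 * (f3 x * x ^ 3) + 12 * (f2 x * x ^ 2)
      - 24 * (f1 x * x ^ 1) + 24 * f x) / x ^ 5) 3 e3
    (fun x hx => by
    have hx0 : x ≠ 0 := hx.1.ne'
    refine ((((((H3 x hx).mul (P 3 x)).sub (((H2 x hx).mul (P 2 x)).const_mul 3)).add
      (((H1 x hx).mul (P 1 x)).const_mul 6)).sub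
      ((H0 x hx).const_mul 6)).div (P 4 x) (pow_ne_zero _ hx0)).congr_deriv ?_
    norm_num
    field_simp
    ring)
  have hmem : Set.Ioo 0 δ ∈ nhdsWithin (0:ℝ) (Set.Ioi 0) := Ioo_mem_nhdsGT hδ
  refine Filter.Tendsto.congr' (e4.eventuallyEq_of_mem hmem).symm ?_
  have X (n : ℕ) (hn : n ≠ 0) : Filter.Tendsto (fun x : ℝ => x ^ n) (nhdsWithin 0 (Set.Ioi 0))
      (nhds 0) := by
    have : Filter.Tendsto (fun x : ℝ => x ^ n) (nhds 0) (nhds (0 ^ n)) :=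
      (continuous_pow n).tendsto 0
    rw [zero_pow hn] at this
    exact this.mono_left nhdsWithin_le_nhds
  refine HasDerivAt.lhopital_zero_nhdsGT (f' := fun x => f5 x * x ^ 4)
    (g' := fun x => 5 * x ^ 4) ?_ ?_ ?_ ?_ ?_ ?_
  · filter_upwards [hmem] with x hx
    refine ((((((H4 x hx).mul (P 4 x)).sub (((H3 x hx).mul (P 3 x)).const_mul 4)).add
      (((H2 x hx).mul (P 2 x)).const_mul 12)).sub
      (((H1 x hx).mul (P 1 x)).const_mul 24)).add ((H0 x hx).const_mul 24)).congr_deriv ?_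
    norm_num
    ring
  · filter_upwards with x
    exact (P 5 x).congr_deriv (by norm_num)
  · filter_upwards [hmem] with x hx
    have := hx.1
    positivity
  · have := (((((C4.mul (X 4 (by norm_num))).sub ((C3.mul (X 3 (by norm_num))).const_mul 4)).add
      ((C2.mul (X 2 (by norm_num))).const_mul 12)).sub
      ((C1.mul (X 1 (by norm_num))).const_mul 24)).add (C0.const_mul 24))
    simpa [hf0] using this
  · exact X 5 (by norm_num)
  · refine Filter.Tendsto.congr' ?_ (C5.const_mul (1/5))
    filter_upwards [hmem] with x hx
    have hx0 : x ≠ 0 := hx.1.ne'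
    field_simp

/-- Equation (3.52) in the proof of Lemma 3.1: for `w` a `C⁵` function on
`[0,δ)` with `w 0 = 0`, the fourth derivative of `r ↦ w(r)²/r` tends to
`2w'(0)w⁽⁴⁾(0) + 4w''(0)w'''(0)` as `r → 0⁺`, which equals one fifth of the
fifth derivative of `w²` at `0`. -/
theorem stmt_10 (δ : ℝ) (hδ : 0 < δ) (w : ℝ → ℝ)
    (hw : ContDiffOn ℝ 5 w (Set.Ico 0 δ)) (hw0 : w 0 = 0) :
    Filter.Tendsto (fun r => iteratedDeriv 4 (fun x => (w x) ^ 2 / x) r)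
      (nhdsWithin 0 (Set.Ioi 0))
      (nhds (2 * derivWithin w (Set.Ico 0 δ) 0 *
          iteratedDerivWithin 4 w (Set.Ico 0 δ) 0
        + 4 * iteratedDerivWithin 2 w (Set.Ico 0 δ) 0 *
          iteratedDerivWithin 3 w (Set.Ico 0 δ) 0)) ∧
    2 * derivWithin w (Set.Ico 0 δ) 0 * iteratedDerivWithin 4 w (Set.Ico 0 δ) 0
        + 4 * iteratedDerivWithin 2 w (Set.Ico 0 δ) 0 *
          iteratedDerivWithin 3 w (Set.Ico 0 δ) 0
      = (1 / 5) * iteratedDerivWithin 5 (fun x => (w x) ^ 2) (Set.Ico 0 δ) 0 := by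
  have h := aux_sq δ hδ w hw hw0
  refine ⟨?_, h⟩
  rw [h]
  exact aux_lim δ hδ (fun x => w x ^ 2) (hw.pow 2) (by simp [hw0])
end

section
/- Let m be a natural number, δ > 0, and let H : [0,δ) → ℝ be m times continuously differentiable. Then the m-th derivative of the function G(r) = (1/r²) ∫₀^r τ H(τ) dτ on (0,δ) converges as r → 0⁺, and lim_{r→0⁺} G^{(m)}(r) = H^{(m)}(0)/(m+2). (The cases m = 1, 3, 5 are the limits (4.36)–(4.38) used in the proof of Theorem 2.7 of the paper to show that the initial data of the stream-function potential lies in H⁷.) -/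
theorem aux_int_s11 (k : ℕ) (δ : ℝ) (F : ℝ → ℝ) (hF : ContinuousOn F (Set.Ico 0 δ))
    (r : ℝ) (hr : r ∈ Set.Ioo 0 δ) :
    IntervalIntegrable (fun τ => τ ^ k * F τ) MeasureTheory.volume 0 r := by
  apply ContinuousOn.intervalIntegrable
  rw [Set.uIcc_of_le hr.1.le]
  have h2 : ContinuousOn F (Set.Icc 0 r) := hF.mono fun x hx => ⟨hx.1, hx.2.trans_lt hr.2⟩
  fun_prop

theorem aux_ftc (k : ℕ) (δ : ℝ) (F : ℝ → ℝ) (hF : ContinuousOn F (Set.Ico 0 δ))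
    (r : ℝ) (hr : r ∈ Set.Ioo 0 δ) :
    HasDerivAt (fun x => ∫ τ in (0:ℝ)..x, τ ^ k * F τ) (r ^ k * F r) r := by
  have hc : ContinuousOn (fun τ => τ ^ k * F τ) (Set.Ioo 0 δ) := by
    have := hF.mono Set.Ioo_subset_Ico_self
    fun_prop
  apply intervalIntegral.integral_hasDerivAt_right (aux_int_s11 k δ F hF r hr)
  · exact hc.stronglyMeasurableAtFilter isOpen_Ioo r hr
  · exact hc.continuousAt (isOpen_Ioo.mem_nhds hr)

theorem aux_parts (k : ℕ) (δ : ℝ) (F F' : ℝ → ℝ) (hF : ContinuousOn F (Set.Ico 0 δ))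
    (hF' : ContinuousOn F' (Set.Ico 0 δ))
    (hd : ∀ x ∈ Set.Ioo 0 δ, HasDerivAt F (F' x) x)
    (r : ℝ) (hr : r ∈ Set.Ioo 0 δ) :
    ∫ τ in (0:ℝ)..r, τ ^ (k+1) * F' τ =
      r ^ (k+1) * F r - (k+1) * ∫ τ in (0:ℝ)..r, τ ^ k * F τ := by
  have h2 : ContinuousOn F (Set.Icc 0 r) := hF.mono fun x hx => ⟨hx.1, hx.2.trans_lt hr.2⟩
  have i1 := aux_int_s11 k δ F hF r hr
  have i2 := aux_int_s11 (k+1) δ F' hF' r hr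
  have := intervalIntegral.integral_eq_sub_of_hasDerivAt_of_le (a := 0) (b := r)
    (f := fun τ => τ ^ (k+1) * F τ)
    (f' := fun τ => (k+1) * (τ ^ k * F τ) + τ ^ (k+1) * F' τ) hr.1.le (by fun_prop)
    (fun x hx => by
      have := (hasDerivAt_pow (k+1) x).mul (hd x ⟨hx.1, hx.2.trans hr.2⟩)
      refine this.congr_deriv ?_
      simp
      ring) ((i1.const_mul _).add i2)
  rw [intervalIntegral.integral_add (i1.const_mul _) i2,
    intervalIntegral.integral_const_mul] at this
  simp at this
  linarith

theorem aux_der (k : ℕ) (δ : ℝ) (F F' : ℝ → ℝ) (hF : ContinuousOn F (Set.Ico 0 δ))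
    (hF' : ContinuousOn F' (Set.Ico 0 δ))
    (hd : ∀ x ∈ Set.Ioo 0 δ, HasDerivAt F (F' x) x)
    (r : ℝ) (hr : r ∈ Set.Ioo 0 δ) :
    HasDerivAt (fun x => (1 / x ^ (k+1)) * ∫ τ in (0:ℝ)..x, τ ^ k * F τ)
      ((1 / r ^ (k+2)) * ∫ τ in (0:ℝ)..r, τ ^ (k+1) * F' τ) r := by
  have hr0 : r ≠ 0 := hr.1.ne'
  have h1 := (aux_ftc k δ F hF r hr).div (hasDerivAt_pow (k+1) r) (pow_ne_zero _ hr0)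
  rw [aux_parts k δ F F' hF hF' hd r hr]
  refine (h1.congr_deriv ?_).congr_of_eventuallyEq
    (Filter.Eventually.of_forall fun x => ?_)
  · simp
    field_simp
    ring
  · simp
    ring

theorem aux_lim_s11 (k : ℕ) (δ : ℝ) (hδ : 0 < δ) (F : ℝ → ℝ) (hF : ContinuousOn F (Set.Ico 0 δ)) :
    Filter.Tendsto (fun x => (1 / x ^ (k+1)) * ∫ τ in (0:ℝ)..x, τ ^ k * F τ)
      (nhdsWithin 0 (Set.Ioi 0)) (nhds (F 0 / ((k:ℝ) + 1))) := by
  have hev : ∀ᶠ x in nhdsWithin (0:ℝ) (Set.Ioi 0), x ∈ Set.Ioo 0 δ := Ioo_mem_nhdsGT hδ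
  have key : Filter.Tendsto (fun x => (∫ τ in (0:ℝ)..x, τ ^ k * F τ) / x ^ (k+1))
      (nhdsWithin 0 (Set.Ioi 0)) (nhds (F 0 / ((k:ℝ) + 1))) := by
    apply HasDerivAt.lhopital_zero_nhdsGT (f' := fun x => x ^ k * F x)
      (g' := fun x => ((k:ℝ)+1) * x ^ k)
    · filter_upwards [hev] with x hx using aux_ftc k δ F hF x hx
    · refine Filter.Eventually.of_forall fun x => ?_
      simpa using hasDerivAt_pow (k+1) x
    · filter_upwards [hev] with x hx
      have := hx.1
      positivity
    · have hx : δ / 2 ∈ Set.Ioo 0 δ := ⟨by linarith, by linarith⟩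
      have hi := aux_int_s11 k δ F hF _ hx
      have hc := intervalIntegral.continuousOn_primitive_interval (μ := MeasureTheory.volume)
        (a := 0) (b := δ/2) (f := fun τ => τ ^ k * F τ)
        ((intervalIntegrable_iff' ).1 hi)
      have h0 := hc 0 Set.left_mem_uIcc
      rw [Set.uIcc_of_le hx.1.le] at h0
      have h0 := h0.tendsto
      simp only [intervalIntegral.integral_same] at h0
      refine h0.mono_left ?_
      rw [← nhdsWithin_Ioo_eq_nhdsGT hx.1]
      exact nhdsWithin_mono _ Set.Ioo_subset_Icc_self
    · have : Filter.Tendsto (fun x:ℝ => x ^ (k+1)) (nhds 0) (nhds (0 ^ (k+1))) :=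
        (continuous_pow (k+1)).tendsto 0
      simp only [ne_eq, Nat.add_eq_zero_iff, one_ne_zero, and_false, not_false_eq_true,
        zero_pow] at this
      exact this.mono_left nhdsWithin_le_nhds
    · have h0 : Filter.Tendsto F (nhdsWithin 0 (Set.Ioi 0)) (nhds (F 0)) := by
        refine (hF 0 ⟨le_rfl, hδ⟩).tendsto.mono_left ?_
        rw [← nhdsWithin_Ioo_eq_nhdsGT hδ]
        exact nhdsWithin_mono _ Set.Ioo_subset_Ico_self
      refine (h0.div_const ((k:ℝ)+1)).congr' ?_
      filter_upwards [hev] with x hx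
      have := hx.1.ne'
      field_simp
  refine key.congr fun x => ?_
  ring

/-- The limits (4.36)–(4.38) in the proof of Theorem 2.7: for `H` a `Cᵐ`
function on `[0,δ)`, the `m`-th derivative of `G r = (1/r²)∫₀^r τ H τ dτ`
tends to `H⁽ᵐ⁾(0)/(m+2)` as `r → 0⁺`. -/
theorem stmt_11 (m : ℕ) (δ : ℝ) (hδ : 0 < δ) (H : ℝ → ℝ)
    (hH : ContDiffOn ℝ m H (Set.Ico 0 δ)) :
    Filter.Tendsto
      (fun r => iteratedDeriv m (fun x => (1 / x ^ 2) * ∫ τ in (0:ℝ)..x, τ * H τ) r)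
      (nhdsWithin 0 (Set.Ioi 0))
      (nhds (iteratedDerivWithin m H (Set.Ico 0 δ) 0 / ((m : ℝ) + 2))) := by
  have hu : UniqueDiffOn ℝ (Set.Ico 0 δ) := uniqueDiffOn_Ico 0 δ
  have hcont : ∀ j ≤ m, ContinuousOn (iteratedDerivWithin j H (Set.Ico 0 δ)) (Set.Ico 0 δ) :=
    fun j hj => hH.continuousOn_iteratedDerivWithin (by exact_mod_cast hj) hu
  have main : ∀ j ≤ m, ∀ r ∈ Set.Ioo 0 δ,
      iteratedDeriv j (fun x => (1 / x ^ 2) * ∫ τ in (0:ℝ)..x, τ * H τ) r =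
      (1 / r ^ (j+1+1)) * ∫ τ in (0:ℝ)..r, τ ^ (j+1) * iteratedDerivWithin j H (Set.Ico 0 δ) τ := by
    intro j
    induction j with
    | zero => intro _ r _; simp
    | succ j ih =>
      intro hj r hr
      rw [iteratedDeriv_succ]
      have he : iteratedDeriv j (fun x => (1 / x ^ 2) * ∫ τ in (0:ℝ)..x, τ * H τ) =ᶠ[nhds r]
          fun r => (1 / r ^ (j+1+1)) *
            ∫ τ in (0:ℝ)..r, τ ^ (j+1) * iteratedDerivWithin j H (Set.Ico 0 δ) τ := by
        filter_upwards [isOpen_Ioo.mem_nhds hr] with x hx using ih (by omega) x hx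
      rw [he.deriv_eq]
      refine (aux_der (j+1) δ _ _ (hcont j (by omega)) (hcont (j+1) hj) ?_ r hr).deriv
      intro x hx
      have hd := hH.differentiableOn_iteratedDerivWithin (m := j) (by exact_mod_cast hj) hu
      have := (hd x (Set.Ioo_subset_Ico_self hx)).hasDerivWithinAt
      rw [iteratedDerivWithin_succ]
      exact this.hasDerivAt (Ico_mem_nhds hx.1 hx.2)
  have hl := aux_lim_s11 (m+1) δ hδ _ (hcont m le_rfl)
  have e : (((m+1 : ℕ) : ℝ) + 1) = (m:ℝ) + 2 := by push_cast; ring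
  rw [e] at hl
  refine hl.congr' ?_
  filter_upwards [Ioo_mem_nhdsGT hδ] with x hx using (main m le_rfl x hx).symm
end

section
/- Let δ > 0 and let φ : [0,δ) → ℝ be seven times continuously differentiable with φ'(0) = φ⁽³⁾(0) = φ⁽⁵⁾(0) = 0. Define (Df)(r) = f'(r)/r on (0,δ) and let D^k denote the k-fold iterate. Then the following limits hold as r → 0⁺: r⁷·(D⁷φ)(r) → −(5/16)·φ⁽⁷⁾(0); r⁵·(D⁶φ)(r) → (1/16)·φ⁽⁷⁾(0); r³·(D⁵φ)(r) → −(1/48)·φ⁽⁷⁾(0); and r·(D⁴φ)(r) → (1/48)·φ⁽⁷⁾(0). (Limits (4.16)–(4.17) in the proof of Lemma 4.1 of the paper, used to prove that radial C⁷ functions with vanishing odd derivatives at the origin lift to H⁷ functions.) -/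
/-- The operator `D` of Lemma 4.1: `(Df)(r) = f'(r)/r`. -/
noncomputable def Dop : (ℝ → ℝ) → (ℝ → ℝ) := fun f r => deriv f r / r


lemma aux_lhop (δ : ℝ) (hδ : 0 < δ) (h h' : ℝ → ℝ) (m : ℕ) (c d : ℝ) (hd : d = c / (m + 1))
    (hh : ∀ r ∈ Set.Ioo 0 δ, HasDerivAt h (h' r) r)
    (h0 : Filter.Tendsto h (nhdsWithin 0 (Set.Ioi 0)) (nhds 0))
    (hl : Filter.Tendsto (fun r => h' r / r ^ m) (nhdsWithin 0 (Set.Ioi 0)) (nhds c)) :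
    Filter.Tendsto (fun r => h r / r ^ (m + 1)) (nhdsWithin 0 (Set.Ioi 0)) (nhds d) := by
  subst hd
  refine HasDerivAt.lhopital_zero_right_on_Ioo (a := 0) (b := δ) hδ (f' := h')
    (g' := fun r => ((m + 1 : ℕ) : ℝ) * r ^ m) hh ?_ ?_ h0 ?_ ?_
  · intro r hr
    simpa using hasDerivAt_pow (m + 1) r
  · intro r hr
    have : 0 < r := hr.1
    positivity
  · have : Filter.Tendsto (fun r : ℝ => r ^ (m + 1)) (nhds 0) (nhds (0 ^ (m + 1))) :=
      (continuous_pow (m + 1)).tendsto 0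
    rw [zero_pow (Nat.succ_ne_zero m)] at this
    exact this.mono_left nhdsWithin_le_nhds
  · refine (hl.div_const ((m : ℝ) + 1)).congr fun r => ?_
    push_cast
    rw [div_div, mul_comm]

lemma aux_term (g : ℕ → ℝ → ℝ) (j k : ℕ) (c r : ℝ) (hr : 0 < r)
    (hg : HasDerivAt (g j) (g (j + 1) r) r) :
    HasDerivAt (fun r => c * (g j r / r ^ k))
      (c * (g (j + 1) r / r ^ k - k * (g j r / r ^ (k + 1)))) r := by
  have h := (hg.div (hasDerivAt_pow k r) (by positivity)).const_mul c
  refine h.congr_deriv ?_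
  congr 1
  rcases k with _ | k
  · simp
  · simp only [Nat.add_sub_cancel]
    field_simp
    ring

lemma aux_step_s13 (δ : ℝ) (f F F' G : ℝ → ℝ) (hf : ∀ r ∈ Set.Ioo 0 δ, f r = F r)
    (hF : ∀ r ∈ Set.Ioo 0 δ, HasDerivAt F (F' r) r)
    (hG : ∀ r ∈ Set.Ioo 0 δ, F' r / r = G r) :
    ∀ r ∈ Set.Ioo 0 δ, Dop f r = G r := by
  intro r hr
  rw [← hG r hr, Dop]
  congr 1
  have : f =ᶠ[nhds r] F := by
    filter_upwards [isOpen_Ioo.mem_nhds hr] with x hx using hf x hx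
  exact ((hF r hr).congr_of_eventuallyEq this).deriv

/-- Limits (4.16)–(4.17) in the proof of Lemma 4.1: for a `C⁷` function `φ` on
`[0,δ)` with vanishing first, third and fifth one-sided derivatives at `0`,
the weighted iterates `r⁷D⁷φ, r⁵D⁶φ, r³D⁵φ, rD⁴φ` converge as `r → 0⁺` to the
stated multiples of `φ⁽⁷⁾(0)`. -/
theorem stmt_13 (δ : ℝ) (hδ : 0 < δ) (φ : ℝ → ℝ)
    (hφ : ContDiffOn ℝ 7 φ (Set.Ico 0 δ))
    (h1 : derivWithin φ (Set.Ico 0 δ) 0 = 0)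
    (h3 : iteratedDerivWithin 3 φ (Set.Ico 0 δ) 0 = 0)
    (h5 : iteratedDerivWithin 5 φ (Set.Ico 0 δ) 0 = 0) :
    Filter.Tendsto (fun r => r ^ 7 * (Dop^[7] φ) r) (nhdsWithin 0 (Set.Ioi 0))
      (nhds (-(5 / 16) * iteratedDerivWithin 7 φ (Set.Ico 0 δ) 0)) ∧
    Filter.Tendsto (fun r => r ^ 5 * (Dop^[6] φ) r) (nhdsWithin 0 (Set.Ioi 0))
      (nhds ((1 / 16) * iteratedDerivWithin 7 φ (Set.Ico 0 δ) 0)) ∧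
    Filter.Tendsto (fun r => r ^ 3 * (Dop^[5] φ) r) (nhdsWithin 0 (Set.Ioi 0))
      (nhds (-(1 / 48) * iteratedDerivWithin 7 φ (Set.Ico 0 δ) 0)) ∧
    Filter.Tendsto (fun r => r * (Dop^[4] φ) r) (nhdsWithin 0 (Set.Ioi 0))
      (nhds ((1 / 48) * iteratedDerivWithin 7 φ (Set.Ico 0 δ) 0)) := by
  obtain ⟨g, hgdef⟩ : ∃ g : ℕ → ℝ → ℝ, g = fun j => iteratedDerivWithin j φ (Set.Ico 0 δ) :=
    ⟨_, rfl⟩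
  have hU : UniqueDiffOn ℝ (Set.Ico 0 δ) := uniqueDiffOn_Ico 0 δ
  have hder : ∀ j : ℕ, j < 7 → ∀ r ∈ Set.Ioo 0 δ, HasDerivAt (g j) (g (j + 1) r) r := by
    intro j hj r hr
    have hd := hφ.differentiableOn_iteratedDerivWithin (m := j) (by exact_mod_cast hj) hU
    have hn : Set.Ico 0 δ ∈ nhds r := Ico_mem_nhds hr.1 hr.2
    have := (hd r ⟨hr.1.le, hr.2⟩).hasDerivWithinAt.hasDerivAt hn
    rw [hgdef]
    simpa only [iteratedDerivWithin_succ] using this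
  have hcont : ∀ j : ℕ, j ≤ 7 →
      Filter.Tendsto (g j) (nhdsWithin 0 (Set.Ioi 0)) (nhds (g j 0)) := by
    intro j hj
    have hc := hφ.continuousOn_iteratedDerivWithin (m := j) (by exact_mod_cast hj) hU
    have h := hc 0 ⟨le_refl _, hδ⟩
    rw [← nhdsWithin_Ioo_eq_nhdsGT hδ, hgdef]
    exact h.mono_left (nhdsWithin_mono _ Set.Ioo_subset_Ico_self)
  have g1 : g 1 0 = 0 := by rw [hgdef]; simpa [iteratedDerivWithin_one] using h1
  have g3 : g 3 0 = 0 := by rw [hgdef]; exact h3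
  have g5 : g 5 0 = 0 := by rw [hgdef]; exact h5
  have g7 : iteratedDerivWithin 7 φ (Set.Ico 0 δ) 0 = g 7 0 := by rw [hgdef]
  have g0 : ∀ r ∈ Set.Ioo 0 δ, φ r = g 0 r := by
    intro r _; rw [hgdef]; simp
  rw [g7]
  have p : ∀ (a : ℝ) (k : ℕ) (r : ℝ), HasDerivAt (fun r => a * r ^ k) (a * (k * r ^ (k - 1))) r :=
    fun a k r => (hasDerivAt_pow k r).const_mul a
  have L7 : Filter.Tendsto (fun r => g 7 r / r ^ 0) (nhdsWithin 0 (Set.Ioi 0)) (nhds (g 7 0)) := by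
    simpa using hcont 7 le_rfl
  have L6 : Filter.Tendsto (fun r => (g 6 r - (g 6 0 / 1 * r ^ 0)) / r ^ 1)
      (nhdsWithin 0 (Set.Ioi 0)) (nhds (g 7 0 / 1)) := by
    refine aux_lhop δ hδ (fun r => g 6 r - (g 6 0 / 1 * r ^ 0))
      (fun r => g 7 r) 0 _ _ ?_ ?_ ?_ L7
    · norm_num; try ring
    · intro r hr
      refine ((hder 6 (by norm_num) r hr).sub (p (g 6 0 / 1) 0 r)).congr_deriv ?_
      norm_num; try ring
    · have hc : Filter.Tendsto (fun r : ℝ => g 6 0 / 1 * r ^ 0) (nhdsWithin 0 (Set.Ioi 0))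
          (nhds (g 6 0)) := by
        have : Continuous (fun r : ℝ => g 6 0 / 1 * r ^ 0) := by fun_prop
        have h := this.tendsto 0
        refine tendsto_nhdsWithin_of_tendsto_nhds ?_
        convert h using 2
        norm_num
      simpa using (hcont 6 (by norm_num)).sub hc
  have L5 : Filter.Tendsto (fun r => (g 5 r - (g 6 0 / 1 * r ^ 1)) / r ^ 2)
      (nhdsWithin 0 (Set.Ioi 0)) (nhds (g 7 0 / 2)) := by
    refine aux_lhop δ hδ (fun r => g 5 r - (g 6 0 / 1 * r ^ 1))
      (fun r => g 6 r - (g 6 0 / 1 * r ^ 0)) 1 _ _ ?_ ?_ ?_ L6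
    · norm_num; try ring
    · intro r hr
      refine ((hder 5 (by norm_num) r hr).sub (p (g 6 0 / 1) 1 r)).congr_deriv ?_
      norm_num; try ring
    · have hc : Filter.Tendsto (fun r : ℝ => g 6 0 / 1 * r ^ 1) (nhdsWithin 0 (Set.Ioi 0))
          (nhds (g 5 0)) := by
        have : Continuous (fun r : ℝ => g 6 0 / 1 * r ^ 1) := by fun_prop
        have h := this.tendsto 0
        rw [g5]
        refine tendsto_nhdsWithin_of_tendsto_nhds ?_
        convert h using 2
        norm_num
      simpa using (hcont 5 (by norm_num)).sub hc
  have L4 : Filter.Tendsto (fun r => (g 4 r - (g 4 0 / 1 * r ^ 0 + g 6 0 / 2 * r ^ 2)) / r ^ 3)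
      (nhdsWithin 0 (Set.Ioi 0)) (nhds (g 7 0 / 6)) := by
    refine aux_lhop δ hδ (fun r => g 4 r - (g 4 0 / 1 * r ^ 0 + g 6 0 / 2 * r ^ 2))
      (fun r => g 5 r - (g 6 0 / 1 * r ^ 1)) 2 _ _ ?_ ?_ ?_ L5
    · norm_num; try ring
    · intro r hr
      refine ((hder 4 (by norm_num) r hr).sub ((p (g 4 0 / 1) 0 r).add (p (g 6 0 / 2) 2 r))).congr_deriv ?_
      norm_num; try ring
    · have hc : Filter.Tendsto (fun r : ℝ => g 4 0 / 1 * r ^ 0 + g 6 0 / 2 * r ^ 2) (nhdsWithin 0 (Set.Ioi 0))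
          (nhds (g 4 0)) := by
        have : Continuous (fun r : ℝ => g 4 0 / 1 * r ^ 0 + g 6 0 / 2 * r ^ 2) := by fun_prop
        have h := this.tendsto 0
        refine tendsto_nhdsWithin_of_tendsto_nhds ?_
        convert h using 2
        norm_num
      simpa using (hcont 4 (by norm_num)).sub hc
  have L3 : Filter.Tendsto (fun r => (g 3 r - (g 4 0 / 1 * r ^ 1 + g 6 0 / 6 * r ^ 3)) / r ^ 4)
      (nhdsWithin 0 (Set.Ioi 0)) (nhds (g 7 0 / 24)) := by
    refine aux_lhop δ hδ (fun r => g 3 r - (g 4 0 / 1 * r ^ 1 + g 6 0 / 6 * r ^ 3))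
      (fun r => g 4 r - (g 4 0 / 1 * r ^ 0 + g 6 0 / 2 * r ^ 2)) 3 _ _ ?_ ?_ ?_ L4
    · norm_num; try ring
    · intro r hr
      refine ((hder 3 (by norm_num) r hr).sub ((p (g 4 0 / 1) 1 r).add (p (g 6 0 / 6) 3 r))).congr_deriv ?_
      norm_num; try ring
    · have hc : Filter.Tendsto (fun r : ℝ => g 4 0 / 1 * r ^ 1 + g 6 0 / 6 * r ^ 3) (nhdsWithin 0 (Set.Ioi 0))
          (nhds (g 3 0)) := by
        have : Continuous (fun r : ℝ => g 4 0 / 1 * r ^ 1 + g 6 0 / 6 * r ^ 3) := by fun_prop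
        have h := this.tendsto 0
        rw [g3]
        refine tendsto_nhdsWithin_of_tendsto_nhds ?_
        convert h using 2
        norm_num
      simpa using (hcont 3 (by norm_num)).sub hc
  have L2 : Filter.Tendsto (fun r => (g 2 r - (g 2 0 / 1 * r ^ 0 + g 4 0 / 2 * r ^ 2 + g 6 0 / 24 * r ^ 4)) / r ^ 5)
      (nhdsWithin 0 (Set.Ioi 0)) (nhds (g 7 0 / 120)) := by
    refine aux_lhop δ hδ (fun r => g 2 r - (g 2 0 / 1 * r ^ 0 + g 4 0 / 2 * r ^ 2 + g 6 0 / 24 * r ^ 4))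
      (fun r => g 3 r - (g 4 0 / 1 * r ^ 1 + g 6 0 / 6 * r ^ 3)) 4 _ _ ?_ ?_ ?_ L3
    · norm_num; try ring
    · intro r hr
      refine ((hder 2 (by norm_num) r hr).sub (((p (g 2 0 / 1) 0 r).add (p (g 4 0 / 2) 2 r)).add (p (g 6 0 / 24) 4 r))).congr_deriv ?_
      norm_num; try ring
    · have hc : Filter.Tendsto (fun r : ℝ => g 2 0 / 1 * r ^ 0 + g 4 0 / 2 * r ^ 2 + g 6 0 / 24 * r ^ 4) (nhdsWithin 0 (Set.Ioi 0))
          (nhds (g 2 0)) := by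
        have : Continuous (fun r : ℝ => g 2 0 / 1 * r ^ 0 + g 4 0 / 2 * r ^ 2 + g 6 0 / 24 * r ^ 4) := by fun_prop
        have h := this.tendsto 0
        refine tendsto_nhdsWithin_of_tendsto_nhds ?_
        convert h using 2
        norm_num
      simpa using (hcont 2 (by norm_num)).sub hc
  have L1 : Filter.Tendsto (fun r => (g 1 r - (g 2 0 / 1 * r ^ 1 + g 4 0 / 6 * r ^ 3 + g 6 0 / 120 * r ^ 5)) / r ^ 6)
      (nhdsWithin 0 (Set.Ioi 0)) (nhds (g 7 0 / 720)) := by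
    refine aux_lhop δ hδ (fun r => g 1 r - (g 2 0 / 1 * r ^ 1 + g 4 0 / 6 * r ^ 3 + g 6 0 / 120 * r ^ 5))
      (fun r => g 2 r - (g 2 0 / 1 * r ^ 0 + g 4 0 / 2 * r ^ 2 + g 6 0 / 24 * r ^ 4)) 5 _ _ ?_ ?_ ?_ L2
    · norm_num; try ring
    · intro r hr
      refine ((hder 1 (by norm_num) r hr).sub (((p (g 2 0 / 1) 1 r).add (p (g 4 0 / 6) 3 r)).add (p (g 6 0 / 120) 5 r))).congr_deriv ?_
      norm_num; try ring
    · have hc : Filter.Tendsto (fun r : ℝ => g 2 0 / 1 * r ^ 1 + g 4 0 / 6 * r ^ 3 + g 6 0 / 120 * r ^ 5) (nhdsWithin 0 (Set.Ioi 0))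
          (nhds (g 1 0)) := by
        have : Continuous (fun r : ℝ => g 2 0 / 1 * r ^ 1 + g 4 0 / 6 * r ^ 3 + g 6 0 / 120 * r ^ 5) := by fun_prop
        have h := this.tendsto 0
        rw [g1]
        refine tendsto_nhdsWithin_of_tendsto_nhds ?_
        convert h using 2
        norm_num
      simpa using (hcont 1 (by norm_num)).sub hc
  have D1 : ∀ r ∈ Set.Ioo 0 δ, (Dop^[1] φ) r = (1) * (g 1 r / r ^ 1) := by
    refine aux_step_s13 δ φ (g 0) (g 1) _ g0 (hder 0 (by norm_num)) ?_
    intro r hr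
    simp
  have D2 : ∀ r ∈ Set.Ioo 0 δ, (Dop^[2] φ) r =
      (1) * (g 2 r / r ^ 2) + (-1) * (g 1 r / r ^ 3) := by
    rw [Function.iterate_succ_apply']
    refine aux_step_s13 δ _ _ _ _ D1 (fun r hr => (aux_term g 1 1 (1) r hr.1 (hder 1 (by norm_num) r hr))) ?_
    intro r hr
    have hr0 : r ≠ 0 := hr.1.ne'
    norm_num
    field_simp
    ring
  have D3 : ∀ r ∈ Set.Ioo 0 δ, (Dop^[3] φ) r =
      (1) * (g 3 r / r ^ 3) + (-3) * (g 2 r / r ^ 4) + (3) * (g 1 r / r ^ 5) := by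
    rw [Function.iterate_succ_apply']
    refine aux_step_s13 δ _ _ _ _ D2 (fun r hr => ((aux_term g 2 2 (1) r hr.1 (hder 2 (by norm_num) r hr)).add
      (aux_term g 1 3 (-1) r hr.1 (hder 1 (by norm_num) r hr)))) ?_
    intro r hr
    have hr0 : r ≠ 0 := hr.1.ne'
    norm_num
    field_simp
    ring
  have D4 : ∀ r ∈ Set.Ioo 0 δ, (Dop^[4] φ) r =
      (1) * (g 4 r / r ^ 4) + (-6) * (g 3 r / r ^ 5) + (15) * (g 2 r / r ^ 6) + (-15) * (g 1 r / r ^ 7) := by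
    rw [Function.iterate_succ_apply']
    refine aux_step_s13 δ _ _ _ _ D3 (fun r hr => (((aux_term g 3 3 (1) r hr.1 (hder 3 (by norm_num) r hr)).add
      (aux_term g 2 4 (-3) r hr.1 (hder 2 (by norm_num) r hr))).add
      (aux_term g 1 5 (3) r hr.1 (hder 1 (by norm_num) r hr)))) ?_
    intro r hr
    have hr0 : r ≠ 0 := hr.1.ne'
    norm_num
    field_simp
    ring
  have D5 : ∀ r ∈ Set.Ioo 0 δ, (Dop^[5] φ) r =
      (1) * (g 5 r / r ^ 5) + (-10) * (g 4 r / r ^ 6) + (45) * (g 3 r / r ^ 7) + (-105) * (g 2 r / r ^ 8) + (105) * (g 1 r / r ^ 9) := by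
    rw [Function.iterate_succ_apply']
    refine aux_step_s13 δ _ _ _ _ D4 (fun r hr => ((((aux_term g 4 4 (1) r hr.1 (hder 4 (by norm_num) r hr)).add
      (aux_term g 3 5 (-6) r hr.1 (hder 3 (by norm_num) r hr))).add
      (aux_term g 2 6 (15) r hr.1 (hder 2 (by norm_num) r hr))).add
      (aux_term g 1 7 (-15) r hr.1 (hder 1 (by norm_num) r hr)))) ?_
    intro r hr
    have hr0 : r ≠ 0 := hr.1.ne'
    norm_num
    field_simp
    ring
  have D6 : ∀ r ∈ Set.Ioo 0 δ, (Dop^[6] φ) r =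
      (1) * (g 6 r / r ^ 6) + (-15) * (g 5 r / r ^ 7) + (105) * (g 4 r / r ^ 8) + (-420) * (g 3 r / r ^ 9) + (945) * (g 2 r / r ^ 10) + (-945) * (g 1 r / r ^ 11) := by
    rw [Function.iterate_succ_apply']
    refine aux_step_s13 δ _ _ _ _ D5 (fun r hr => (((((aux_term g 5 5 (1) r hr.1 (hder 5 (by norm_num) r hr)).add
      (aux_term g 4 6 (-10) r hr.1 (hder 4 (by norm_num) r hr))).add
      (aux_term g 3 7 (45) r hr.1 (hder 3 (by norm_num) r hr))).add
      (aux_term g 2 8 (-105) r hr.1 (hder 2 (by norm_num) r hr))).add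
      (aux_term g 1 9 (105) r hr.1 (hder 1 (by norm_num) r hr)))) ?_
    intro r hr
    have hr0 : r ≠ 0 := hr.1.ne'
    norm_num
    field_simp
    ring
  have D7 : ∀ r ∈ Set.Ioo 0 δ, (Dop^[7] φ) r =
      (1) * (g 7 r / r ^ 7) + (-21) * (g 6 r / r ^ 8) + (210) * (g 5 r / r ^ 9) + (-1260) * (g 4 r / r ^ 10) + (4725) * (g 3 r / r ^ 11) + (-10395) * (g 2 r / r ^ 12) + (10395) * (g 1 r / r ^ 13) := by
    rw [Function.iterate_succ_apply']
    refine aux_step_s13 δ _ _ _ _ D6 (fun r hr => ((((((aux_term g 6 6 (1) r hr.1 (hder 6 (by norm_num) r hr)).add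
      (aux_term g 5 7 (-15) r hr.1 (hder 5 (by norm_num) r hr))).add
      (aux_term g 4 8 (105) r hr.1 (hder 4 (by norm_num) r hr))).add
      (aux_term g 3 9 (-420) r hr.1 (hder 3 (by norm_num) r hr))).add
      (aux_term g 2 10 (945) r hr.1 (hder 2 (by norm_num) r hr))).add
      (aux_term g 1 11 (-945) r hr.1 (hder 1 (by norm_num) r hr)))) ?_
    intro r hr
    have hr0 : r ≠ 0 := hr.1.ne'
    norm_num
    field_simp
    ring
  have hev : ∀ᶠ r in nhdsWithin (0 : ℝ) (Set.Ioi 0), r ∈ Set.Ioo 0 δ := Ioo_mem_nhdsGT hδ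
  refine ⟨?_, ?_, ?_, ?_⟩
  · have h := (((((((L7.const_mul (1)).add (L6.const_mul (-21))).add (L5.const_mul (210))).add (L4.const_mul (-1260))).add (L3.const_mul (4725))).add (L2.const_mul (-10395))).add (L1.const_mul (10395)))
    refine Filter.Tendsto.congr' ?_ (h.trans (le_of_eq ?_))
    · filter_upwards [hev] with r hr
      have hr0 : r ≠ 0 := hr.1.ne'
      rw [D7 r hr]
      field_simp
      ring
    · congr 1
      ring
  · have h := ((((((L6.const_mul (1)).add (L5.const_mul (-15))).add (L4.const_mul (105))).add (L3.const_mul (-420))).add (L2.const_mul (945))).add (L1.const_mul (-945)))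
    refine Filter.Tendsto.congr' ?_ (h.trans (le_of_eq ?_))
    · filter_upwards [hev] with r hr
      have hr0 : r ≠ 0 := hr.1.ne'
      rw [D6 r hr]
      field_simp
      ring
    · congr 1
      ring
  · have h := (((((L5.const_mul (1)).add (L4.const_mul (-10))).add (L3.const_mul (45))).add (L2.const_mul (-105))).add (L1.const_mul (105)))
    refine Filter.Tendsto.congr' ?_ (h.trans (le_of_eq ?_))
    · filter_upwards [hev] with r hr
      have hr0 : r ≠ 0 := hr.1.ne'
      rw [D5 r hr]
      field_simp
      ring
    · congr 1
      ring
  · have h := ((((L4.const_mul (1)).add (L3.const_mul (-6))).add (L2.const_mul (15))).add (L1.const_mul (-15)))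
    refine Filter.Tendsto.congr' ?_ (h.trans (le_of_eq ?_))
    · filter_upwards [hev] with r hr
      have hr0 : r ≠ 0 := hr.1.ne'
      rw [D4 r hr]
      field_simp
      ring
    · congr 1
      ring
end

section
/- Let γ > 1, c_v > 0 and let p, ρ, q be positive reals; set c² = γp/ρ and M² = q²/c². Then the determinant of the 4×4 real matrix with rows (q/c², 0, ρ, −ρq/(γc_v)), (1+M², 0, 2ρq, −ρq²/(γc_v)), (0, 1, 0, 0), (1/ρ, 0, q, p/((γ−1)c_v ρ)) equals (p/((γ−1)c_v))·(1 − M²); in particular the matrix is invertible whenever M ≠ 1. (Determinant identity (5.34) of the paper, showing the linearized Rankine–Hugoniot system is uniquely solvable for subsonic downstream states.) -/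
/-- Determinant identity (5.34): the gradient matrix `A_s` of the linearized
Rankine–Hugoniot conditions has determinant `(p/((γ-1)c_v))(1 - M²)`; in
particular it is invertible whenever `M² ≠ 1`. -/
theorem stmt_14 (γ cv p ρ q c2 M2 : ℝ) (hγ : 1 < γ) (hcv : 0 < cv)
    (hp : 0 < p) (hρ : 0 < ρ) (hq : 0 < q)
    (hc2 : c2 = γ * p / ρ) (hM2 : M2 = q ^ 2 / c2)
    (A : Matrix (Fin 4) (Fin 4) ℝ)
    (hA : A = !![q / c2, 0, ρ, -(ρ * q / (γ * cv));
                 1 + M2, 0, 2 * ρ * q, -(ρ * q ^ 2 / (γ * cv));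
                 0, 1, 0, 0;
                 1 / ρ, 0, q, p / ((γ - 1) * cv * ρ)]) :
    A.det = (p / ((γ - 1) * cv)) * (1 - M2) ∧ (M2 ≠ 1 → IsUnit A) := by
  have hg : 0 < γ - 1 := by linarith
  have hg0 : 0 < γ := by linarith
  have hc : 0 < c2 := by rw [hc2]; positivity
  have hdet : A.det = (p / ((γ - 1) * cv)) * (1 - M2) := by
    rw [hA, hM2]
    clear hA hM2 hc2
    simp [Matrix.det_succ_row_zero, Fin.sum_univ_succ, Fin.succAbove]
    have hg1 := hg.ne'
    field_simp
    ring
  refine ⟨hdet, fun hM => ?_⟩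
  rw [Matrix.isUnit_iff_isUnit_det, hdet, isUnit_iff_ne_zero]
  exact mul_ne_zero (by positivity) (sub_ne_zero.mpr hM.symm)
end

section
/- Let n ≥ 2, R > 0, and let φ : [0,R] × ℝ → ℝ. Define Φ on {(x,t) ∈ ℝⁿ × ℝ : ‖x‖ ≤ R} by Φ(x,t) = φ(‖x‖, t). Then Φ is continuously differentiable on the closed set B̄_R × ℝ if and only if φ is continuously differentiable on [0,R] × ℝ and ∂_r φ(0,t) = 0 for every t ∈ ℝ. (The first-order case of Lemma 4.1 of the paper, characterizing when radially symmetric functions are smooth across the symmetry axis.) -/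
theorem stmt_18_aux_fwd (n : ℕ) (hn : 2 ≤ n) (R : ℝ) (hR : 0 < R)
    (φ : ℝ × ℝ → ℝ)
    (h : ContDiffOn ℝ 1 (fun p : EuclideanSpace ℝ (Fin n) × ℝ => φ (‖p.1‖, p.2))
        ((Metric.closedBall (0 : EuclideanSpace ℝ (Fin n)) R) ×ˢ
          (Set.univ : Set ℝ))) :
      (ContDiffOn ℝ 1 φ ((Set.Icc 0 R) ×ˢ (Set.univ : Set ℝ)) ∧
        ∀ t : ℝ, derivWithin (fun r => φ (r, t)) (Set.Icc (0:ℝ) R) 0 = 0) := by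
  obtain ⟨e, he⟩ : ∃ e : EuclideanSpace ℝ (Fin n), ‖e‖ = 1 :=
    ⟨EuclideanSpace.single ⟨0, by omega⟩ 1, by simp⟩
  constructor
  · have hg : ContDiff ℝ 1 (fun p : ℝ × ℝ => ((p.1 • e, p.2) : EuclideanSpace ℝ (Fin n) × ℝ)) := by
      fun_prop
    have := h.comp (s := (Set.Icc 0 R) ×ˢ (Set.univ : Set ℝ)) hg.contDiffOn (by
      rintro ⟨r, t⟩ ⟨⟨h0, h1⟩, -⟩
      simp only [Set.mem_prod, Metric.mem_closedBall, dist_zero_right, norm_smul, he]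
      simp at h0 h1 ⊢
      rw [abs_of_nonneg h0]; exact h1)
    refine this.congr ?_
    rintro ⟨r, t⟩ ⟨⟨h0, h1⟩, -⟩
    simp at h0
    simp [norm_smul, he, abs_of_nonneg h0]
  · intro t
    have hd : DifferentiableAt ℝ (fun p : EuclideanSpace ℝ (Fin n) × ℝ => φ (‖p.1‖, p.2)) (0, t) := by
      refine (h.contDiffAt ?_).differentiableAt (by simp)
      exact prod_mem_nhds (Metric.closedBall_mem_nhds _ hR) Filter.univ_mem
    have hd2 : DifferentiableAt ℝ (fun r : ℝ => φ (|r|, t)) 0 := by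
      have : DifferentiableAt ℝ (fun r : ℝ => ((r • e, t) : EuclideanSpace ℝ (Fin n) × ℝ)) 0 := by
        fun_prop
      have h3 := DifferentiableAt.comp (0:ℝ) (by simpa using hd) this
      simpa [Function.comp_def, norm_smul, he] using h3
    have h0 : deriv (fun r : ℝ => φ (|r|, t)) 0 = 0 := by
      have := deriv_comp_neg (fun r : ℝ => φ (|r|, t)) 0
      simp at this
      linarith
    have h1 := hd2.hasDerivAt
    rw [h0] at h1
    have hu : UniqueDiffWithinAt ℝ (Set.Icc (0:ℝ) R) 0 :=
      uniqueDiffOn_Icc hR 0 ⟨le_rfl, hR.le⟩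
    refine HasDerivWithinAt.derivWithin ?_ hu
    refine h1.hasDerivWithinAt.congr ?_ (by simp)
    intro x hx
    simp [abs_of_nonneg hx.1]

theorem stmt_18_aux_bwd (n : ℕ) (R : ℝ) (hR : 0 < R)
    (φ : ℝ × ℝ → ℝ)
    (h : ContDiffOn ℝ 1 φ ((Set.Icc 0 R) ×ˢ (Set.univ : Set ℝ)))
    (h0 : ∀ t : ℝ, derivWithin (fun r => φ (r, t)) (Set.Icc (0:ℝ) R) 0 = 0) :
    ContDiffOn ℝ 1 (fun p : EuclideanSpace ℝ (Fin n) × ℝ => φ (‖p.1‖, p.2))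
        ((Metric.closedBall (0 : EuclideanSpace ℝ (Fin n)) R) ×ˢ
          (Set.univ : Set ℝ)) := by
  set D := (Set.Icc 0 R) ×ˢ (Set.univ : Set ℝ) with hD
  set C := (Metric.closedBall (0 : EuclideanSpace ℝ (Fin n)) R) ×ˢ (Set.univ : Set ℝ) with hC
  have huD : UniqueDiffOn ℝ D := (uniqueDiffOn_Icc hR).prod uniqueDiffOn_univ
  have huC : UniqueDiffOn ℝ C :=
    (uniqueDiffOn_convex (convex_closedBall _ _)
      ⟨0, mem_interior_iff_mem_nhds.2 (Metric.closedBall_mem_nhds _ hR)⟩).prod uniqueDiffOn_univ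
  let g : EuclideanSpace ℝ (Fin n) × ℝ → ℝ × ℝ := fun p => (‖p.1‖, p.2)
  have hgc : Continuous g := by fun_prop
  have hgm : Set.MapsTo g C D := by
    rintro ⟨x, t⟩ ⟨hx, -⟩
    simp at hx
    simp [g, hD, hx]
  let f' := fderivWithin ℝ φ D
  have hf' : ∀ p ∈ D, HasFDerivWithinAt φ (f' p) D p := fun p hp =>
    (h.differentiableOn (by simp) p hp).hasFDerivWithinAt
  have hfc : ContinuousOn f' D := h.continuousOn_fderivWithin huD (by simp)
  have ha0 : ∀ t, f' (0, t) (1, 0) = 0 := by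
    intro t
    have hm : ((0:ℝ), t) ∈ D := by simp [hD, hR.le]
    have h1 : HasDerivWithinAt (fun r : ℝ => (r, t)) ((1:ℝ), (0:ℝ)) (Set.Icc (0:ℝ) R) 0 :=
      ((hasDerivAt_id (0:ℝ)).prodMk (hasDerivAt_const (0:ℝ) t)).hasDerivWithinAt
    have h2 := (hf' _ hm).comp_hasDerivWithinAt (0:ℝ) h1 (by
      intro r hr; exact ⟨hr, trivial⟩)
    exact (h2.derivWithin (uniqueDiffOn_Icc hR 0 ⟨le_rfl, hR.le⟩)).symm.trans (h0 t)
  let A : EuclideanSpace ℝ (Fin n) × ℝ → (EuclideanSpace ℝ (Fin n) × ℝ →L[ℝ] ℝ) := fun p =>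
    (f' (g p) (1, 0)) • (‖p.1‖⁻¹ • (innerSL ℝ p.1).comp (ContinuousLinearMap.fst ℝ _ ℝ))
  let B : EuclideanSpace ℝ (Fin n) × ℝ → (EuclideanSpace ℝ (Fin n) × ℝ →L[ℝ] ℝ) := fun p =>
    (f' (g p) (0, 1)) • ContinuousLinearMap.snd ℝ _ ℝ
  have hlin : ∀ p (r s : ℝ), f' p (r, s) = r * f' p (1, 0) + s * f' p (0, 1) := by
    intro p r s
    have : (r, s) = r • ((1:ℝ), (0:ℝ)) + s • ((0:ℝ), (1:ℝ)) := by simp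
    rw [this, map_add, map_smul, map_smul]; simp
  have hac : ContinuousOn (fun p => f' (g p) (1, 0)) C :=
    (hfc.comp hgc.continuousOn hgm).clm_apply continuousOn_const
  have hbc : ContinuousOn (fun p => f' (g p) (0, 1)) C :=
    (hfc.comp hgc.continuousOn hgm).clm_apply continuousOn_const
  have hkey : ∀ p ∈ C, HasFDerivWithinAt (fun p => φ (g p)) (A p + B p) C p := by
    rintro ⟨x, t⟩ hp
    by_cases hx : x = 0
    · subst hx
      have h1 := (hf' _ (hgm hp)).isLittleO
      refine HasFDerivWithinAt.of_isLittleO ?_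
      have h2 : Filter.Tendsto g (nhdsWithin (0, t) C) (nhdsWithin (g (0, t)) D) :=
        hgc.continuousWithinAt.tendsto_nhdsWithin hgm
      have h3 := h1.comp_tendsto h2
      refine (h3.congr_left ?_).trans_isBigO ?_
      · rintro ⟨y, s⟩
        simp [g, A, B]
        rw [hlin _ ‖y‖ s, hlin _ 0 t]; simp [ha0]; ring
      · refine Asymptotics.IsBigO.of_bound 1 (Filter.Eventually.of_forall ?_)
        rintro ⟨y, s⟩
        simp [g, Prod.norm_def]
    · have hn : HasFDerivAt (fun y : EuclideanSpace ℝ (Fin n) => ‖y‖) (‖x‖⁻¹ • innerSL ℝ x) x := by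
        have hx2 : ‖x‖ ^ 2 ≠ 0 := by simpa using hx
        have h1 := (hasStrictFDerivAt_norm_sq x).hasFDerivAt.sqrt hx2
        simp only [Real.sqrt_sq (norm_nonneg _)] at h1
        refine h1.congr_fderiv ?_
        ext v
        simp
        ring
      have hg1 : HasFDerivAt g (((‖x‖⁻¹ • innerSL ℝ x).comp (ContinuousLinearMap.fst ℝ _ ℝ)).prod
          (ContinuousLinearMap.snd ℝ _ ℝ)) (x, t) :=
        (HasFDerivAt.comp (x, t) hn hasFDerivAt_fst).prodMk hasFDerivAt_snd
      refine ((hf' _ (hgm hp)).comp (x, t) hg1.hasFDerivWithinAt hgm).congr_fderiv ?_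
      ext v
      all_goals simp [A, B]
      all_goals rw [hlin]; simp
      all_goals ring
  have hBc : ContinuousOn B C := hbc.smul continuousOn_const
  have hAc : ContinuousOn A C := by
    rintro ⟨x, t⟩ hp
    by_cases hx : x = 0
    · subst hx
      have hA0 : A (0, t) = 0 := by simp [A]
      have h1 := hac _ hp
      unfold ContinuousWithinAt at h1 ⊢
      rw [hA0]
      have e0 : f' (g (0, t)) (1, 0) = 0 := by simpa [g] using ha0 t
      simp only [e0] at h1
      have h2 := h1.norm
      rw [norm_zero] at h2
      refine squeeze_zero_norm (fun p => ?_) h2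
      simp only [A]
      rw [norm_smul]
      refine mul_le_of_le_one_right (norm_nonneg _) ?_
      refine ContinuousLinearMap.opNorm_le_bound _ zero_le_one ?_
      rintro ⟨v, s⟩
      have h3 : |inner ℝ p.1 v| ≤ ‖p.1‖ * ‖v‖ := abs_real_inner_le_norm _ _
      have h4 : ‖v‖ ≤ ‖(v, s)‖ := le_max_left _ _
      have h5 : ‖p.1‖⁻¹ * ‖p.1‖ ≤ 1 := inv_mul_le_one
      simp only [smul_apply, ContinuousLinearMap.comp_apply, ContinuousLinearMap.coe_fst',
        innerSL_apply_apply, smul_eq_mul, norm_mul, norm_inv, Real.norm_eq_abs, abs_norm]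
      calc ‖p.1‖⁻¹ * |inner ℝ p.1 v| ≤ ‖p.1‖⁻¹ * (‖p.1‖ * ‖v‖) := by gcongr
        _ = (‖p.1‖⁻¹ * ‖p.1‖) * ‖v‖ := by ring
        _ ≤ 1 * ‖(v, s)‖ := by gcongr
    · refine (hac _ hp).smul (ContinuousAt.continuousWithinAt ?_)
      refine ContinuousAt.smul (f := fun p : EuclideanSpace ℝ (Fin n) × ℝ => ‖p.1‖⁻¹) ?_ ?_
      · exact ContinuousAt.inv₀ (by fun_prop) (by simpa using hx)
      · fun_prop
  have := (contDiffOn_succ_iff_hasFDerivWithinAt_of_uniqueDiffOn (𝕜 := ℝ) (n := 0)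
    (f := fun p => φ (g p)) huC).2
  rw [zero_add] at this
  exact this ⟨by simp, fun p => A p + B p, contDiffOn_zero.2 (hAc.add hBc), hkey⟩


/-- The first-order case of Lemma 4.1: a radially symmetric function
`Φ(x,t) = φ(‖x‖,t)` is `C¹` on the closed cylinder `B̄_R × ℝ` iff `φ` is `C¹`
on `[0,R] × ℝ` and its one-sided radial derivative vanishes on the axis. -/
theorem stmt_18 (n : ℕ) (hn : 2 ≤ n) (R : ℝ) (hR : 0 < R)
    (φ : ℝ × ℝ → ℝ) :
    ContDiffOn ℝ 1 (fun p : EuclideanSpace ℝ (Fin n) × ℝ => φ (‖p.1‖, p.2))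
        ((Metric.closedBall (0 : EuclideanSpace ℝ (Fin n)) R) ×ˢ
          (Set.univ : Set ℝ)) ↔
      (ContDiffOn ℝ 1 φ ((Set.Icc 0 R) ×ˢ (Set.univ : Set ℝ)) ∧
        ∀ t : ℝ, derivWithin (fun r => φ (r, t)) (Set.Icc (0:ℝ) R) 0 = 0) := by
  exact ⟨stmt_18_aux_fwd n hn R hR φ, fun h => stmt_18_aux_bwd n R hR φ h.1 h.2⟩
end
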